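/- arXiv:1406.5877 — 3 statements merged into one kernel-verified Lean document; each statement's English description precedes it below -/
import Mathlib

section
/- Sufficiency of the Helmholtz-type conditions (21): let (A, B, c) be a triple as in the context, smooth on an open subset Ω ⊆ ℝ × ℝ^q × ℝ^q (coordinates (t,x,v)), with A skew-symmetric, satisfying conditions (21), and let E be the associated third-order expression (20). Then E is locally variational: every point of Ω × ℝ^q (coordinates (t,x,v,v′)) has an open neighborhood U and a smooth function L = L(t,x,v,v′) defined on U such that for every smooth curve c : I → ℝ^q whose prolongation t ↦ (t, c(t), ċ(t), c̈(t)) lies in U, the Euler–Poisson expressions of L satisfy E_a[L,c](t) = E_a(t, c(t), ċ(t), c̈(t), c⃛(t)) for all a = 1,…,q and all t ∈ I. -/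
noncomputable section

/-- Partial derivative in `t` of a function `F(t,x,v)` on `ℝ × ℝ^q × ℝ^q`. -/
def pdt {q : ℕ} (F : ℝ → (Fin q → ℝ) → (Fin q → ℝ) → ℝ)
    (t : ℝ) (x v : Fin q → ℝ) : ℝ :=
  deriv (fun s => F s x v) t

/-- Partial derivative in `x^a` of a function `F(t,x,v)`. -/
def pdx {q : ℕ} (a : Fin q) (F : ℝ → (Fin q → ℝ) → (Fin q → ℝ) → ℝ)
    (t : ℝ) (x v : Fin q → ℝ) : ℝ :=
  deriv (fun s : ℝ => F t (x + s • (Pi.single a 1 : Fin q → ℝ)) v) 0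

/-- Partial derivative in `v^a` of a function `F(t,x,v)`. -/
def pdv {q : ℕ} (a : Fin q) (F : ℝ → (Fin q → ℝ) → (Fin q → ℝ) → ℝ)
    (t : ℝ) (x v : Fin q → ℝ) : ℝ :=
  deriv (fun s : ℝ => F t x (v + s • (Pi.single a 1 : Fin q → ℝ))) 0

/-- The total-derivative operator `D₁ = ∂_t + v^a ∂_{x^a}`. -/
def D1 {q : ℕ} (F : ℝ → (Fin q → ℝ) → (Fin q → ℝ) → ℝ) :
    ℝ → (Fin q → ℝ) → (Fin q → ℝ) → ℝ :=
  fun t x v => pdt F t x v + ∑ a, v a * pdx a F t x v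

/-- Partial derivative in `x^a` of a Lagrange function `L(t,x,v,v′)`. -/
def pLx {q : ℕ} (a : Fin q) (L : ℝ → (Fin q → ℝ) → (Fin q → ℝ) → (Fin q → ℝ) → ℝ)
    (t : ℝ) (x v w : Fin q → ℝ) : ℝ :=
  deriv (fun s : ℝ => L t (x + s • (Pi.single a 1 : Fin q → ℝ)) v w) 0

/-- Partial derivative in `v^a` of a Lagrange function `L(t,x,v,v′)`. -/
def pLv {q : ℕ} (a : Fin q) (L : ℝ → (Fin q → ℝ) → (Fin q → ℝ) → (Fin q → ℝ) → ℝ)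
    (t : ℝ) (x v w : Fin q → ℝ) : ℝ :=
  deriv (fun s : ℝ => L t x (v + s • (Pi.single a 1 : Fin q → ℝ)) w) 0

/-- Partial derivative in `v′^a` of a Lagrange function `L(t,x,v,v′)`. -/
def pLw {q : ℕ} (a : Fin q) (L : ℝ → (Fin q → ℝ) → (Fin q → ℝ) → (Fin q → ℝ) → ℝ)
    (t : ℝ) (x v w : Fin q → ℝ) : ℝ :=
  deriv (fun s : ℝ => L t x v (w + s • (Pi.single a 1 : Fin q → ℝ))) 0

/-- The Euler–Poisson (Euler–Lagrange) expressions
`E_a[L,c](t) = ∂L/∂x^a − (d/dt)(∂L/∂v^a) + (d²/dt²)(∂L/∂v′^a)` of a second-order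
Lagrange function `L(t,x,v,v′)` along a curve `c`, all partial derivatives evaluated
along the prolonged curve `t ↦ (t, c(t), ċ(t), c̈(t))`. -/
def eulerPoisson {q : ℕ} (L : ℝ → (Fin q → ℝ) → (Fin q → ℝ) → (Fin q → ℝ) → ℝ)
    (c : ℝ → (Fin q → ℝ)) (t : ℝ) (a : Fin q) : ℝ :=
  pLx a L t (c t) (deriv c t) (deriv (deriv c) t)
    - deriv (fun τ => pLv a L τ (c τ) (deriv c τ) (deriv (deriv c) τ)) t
    + deriv (deriv (fun τ => pLw a L τ (c τ) (deriv c τ) (deriv (deriv c) τ))) t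

/-- The third-order expression (20):
`E_a = A_{ab} v″^b + v′^c (∂A_{ab}/∂v^c) v′^b + B_{ab} v′^b + c_a`. -/
def expr20 {q : ℕ} (A B : Fin q → Fin q → ℝ → (Fin q → ℝ) → (Fin q → ℝ) → ℝ)
    (cc : Fin q → ℝ → (Fin q → ℝ) → (Fin q → ℝ) → ℝ)
    (a : Fin q) (t : ℝ) (x v v' v'' : Fin q → ℝ) : ℝ :=
  (∑ b, A a b t x v * v'' b)
    + (∑ c, ∑ b, v' c * pdv c (A a b) t x v * v' b)
    + (∑ b, B a b t x v * v' b) + cc a t x v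

/-- The Helmholtz-type conditions (21) on a triple `(A,B,c)`, imposed at every point of
a set `Ω ⊆ ℝ × ℝ^q × ℝ^q`.  Square (round) brackets in the paper denote
antisymmetrization (symmetrization) with weight `1/k!`, written out explicitly here. -/
def cond21On {q : ℕ} (Ω : Set (ℝ × (Fin q → ℝ) × (Fin q → ℝ)))
    (A B : Fin q → Fin q → ℝ → (Fin q → ℝ) → (Fin q → ℝ) → ℝ)
    (cc : Fin q → ℝ → (Fin q → ℝ) → (Fin q → ℝ) → ℝ) : Prop :=
  ∀ p ∈ Ω, ∀ a b c : Fin q,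
    -- (i)  ∂_{v^{[a}} A_{bc]} = 0
    (pdv a (A b c) p.1 p.2.1 p.2.2 - pdv b (A a c) p.1 p.2.1 p.2.2
      - pdv c (A b a) p.1 p.2.1 p.2.2 - pdv a (A c b) p.1 p.2.1 p.2.2
      + pdv b (A c a) p.1 p.2.1 p.2.2 + pdv c (A a b) p.1 p.2.1 p.2.2) / 6 = 0 ∧
    -- (ii)  2 B_{[ab]} − 3 D₁ A_{ab} = 0
    2 * ((B a b p.1 p.2.1 p.2.2 - B b a p.1 p.2.1 p.2.2) / 2)
      - 3 * D1 (A a b) p.1 p.2.1 p.2.2 = 0 ∧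
    -- (iii)  2 ∂_{v^{[a}} B_{b]c} − 4 ∂_{x^{[a}} A_{b]c} + ∂_{x^c} A_{ab}
    --        + 2 D₁ ∂_{v^c} A_{ab} = 0
    2 * ((pdv a (B b c) p.1 p.2.1 p.2.2 - pdv b (B a c) p.1 p.2.1 p.2.2) / 2)
      - 4 * ((pdx a (A b c) p.1 p.2.1 p.2.2 - pdx b (A a c) p.1 p.2.1 p.2.2) / 2)
      + pdx c (A a b) p.1 p.2.1 p.2.2
      + 2 * D1 (pdv c (A a b)) p.1 p.2.1 p.2.2 = 0 ∧
    -- (iv)  ∂_{v^{(a}} c_{b)} − D₁ B_{(ab)} = 0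
    (pdv a (cc b) p.1 p.2.1 p.2.2 + pdv b (cc a) p.1 p.2.1 p.2.2) / 2
      - D1 (fun t x v => (B a b t x v + B b a t x v) / 2) p.1 p.2.1 p.2.2 = 0 ∧
    -- (v)  2 ∂_{v^c} ∂_{v^{[a}} c_{b]} − 4 ∂_{x^{[a}} B_{b]c} + D₁² ∂_{v^c} A_{ab}
    --      + 6 D₁ ∂_{x^{[a}} A_{bc]} = 0
    2 * pdv c (fun t x v => (pdv a (cc b) t x v - pdv b (cc a) t x v) / 2)
          p.1 p.2.1 p.2.2
      - 4 * ((pdx a (B b c) p.1 p.2.1 p.2.2 - pdx b (B a c) p.1 p.2.1 p.2.2) / 2)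
      + D1 (D1 (pdv c (A a b))) p.1 p.2.1 p.2.2
      + 6 * D1 (fun t x v =>
          (pdx a (A b c) t x v - pdx b (A a c) t x v - pdx c (A b a) t x v
            - pdx a (A c b) t x v + pdx b (A c a) t x v + pdx c (A a b) t x v) / 6)
          p.1 p.2.1 p.2.2 = 0 ∧
    -- (vi)  4 ∂_{x^{[a}} c_{b]} − 2 D₁ ∂_{v^{[a}} c_{b]} − D₁³ A_{ab} = 0
    4 * ((pdx a (cc b) p.1 p.2.1 p.2.2 - pdx b (cc a) p.1 p.2.1 p.2.2) / 2)
      - 2 * D1 (fun t x v => (pdv a (cc b) t x v - pdv b (cc a) t x v) / 2)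
          p.1 p.2.1 p.2.2
      - D1 (D1 (D1 (A a b))) p.1 p.2.1 p.2.2 = 0

end

open scoped ContDiff Topology

namespace Helm

noncomputable section

/-- Smoothness of a parametric integral, derivative part. -/
theorem hasFDerivAt_param {E G : Type} [NormedAddCommGroup E] [NormedSpace ℝ E]
    [FiniteDimensional ℝ E] [NormedAddCommGroup G] [NormedSpace ℝ G]
    (F : E × ℝ → G) (hF : ContDiff ℝ 1 F) (p : E) :
    HasFDerivAt (fun p => ∫ s in (0:ℝ)..1, F (p, s))
      (∫ s in (0:ℝ)..1, fderiv ℝ (fun p => F (p, s)) p) p := by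
  have hd : ∀ p s, fderiv ℝ (fun p => F (p, s)) p
      = (fderiv ℝ F (p, s)).comp (ContinuousLinearMap.inl ℝ E ℝ) := by
    intro p s
    exact (((hF.differentiable one_ne_zero) (p, s)).hasFDerivAt.comp p
      (hasFDerivAt_prodMk_left p s)).fderiv
  have hcont : Continuous (fun z : E × ℝ => fderiv ℝ (fun p => F (p, z.2)) z.1) := by
    simp_rw [hd]
    have := hF.continuous_fderiv one_ne_zero
    fun_prop
  obtain ⟨C, hC⟩ := (((isCompact_closedBall p 1).prod (isCompact_Icc (a := (0:ℝ)) (b := 1))).image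
    hcont).isBounded.exists_norm_le
  refine intervalIntegral.hasFDerivAt_integral_of_dominated_of_fderiv_le
    (s := Metric.closedBall p 1) (bound := fun _ => C)
    (F' := fun p s => fderiv ℝ (fun p => F (p, s)) p)
    (Metric.closedBall_mem_nhds p one_pos) ?_ ?_ ?_ ?_ ?_ ?_
  · have := hF.continuous
    filter_upwards with x
    exact (Continuous.aestronglyMeasurable (by fun_prop))
  · have := hF.continuous
    exact Continuous.intervalIntegrable (by fun_prop) _ _
  · exact Continuous.aestronglyMeasurable
      (hcont.comp (Continuous.prodMk continuous_const continuous_id))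
  · filter_upwards with t ht x hx
    apply hC
    refine ⟨(x, t), ⟨hx, ?_⟩, rfl⟩
    rw [Set.uIoc_of_le zero_le_one] at ht
    exact ⟨ht.1.le, ht.2⟩
  · exact intervalIntegrable_const
  · filter_upwards with t ht x hx
    have := hF.differentiable one_ne_zero
    have h2 : DifferentiableAt ℝ (fun p => F (p, t)) x := by fun_prop
    exact h2.hasFDerivAt

theorem contDiff_param {E : Type} [NormedAddCommGroup E] [NormedSpace ℝ E]
    [FiniteDimensional ℝ E] (n : ℕ) : ∀ {G : Type} [NormedAddCommGroup G] [NormedSpace ℝ G]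
    (F : E × ℝ → G), ContDiff ℝ ∞ F →
    ContDiff ℝ n (fun p => ∫ s in (0:ℝ)..1, F (p, s)) := by
  induction n with
  | zero =>
    intro G _ _ F hF
    have : Continuous (fun p => ∫ s in (0:ℝ)..1, F (p, s)) :=
      continuous_iff_continuousAt.2 fun p =>
        (hasFDerivAt_param F (hF.of_le (by exact_mod_cast le_top)) p).continuousAt
    exact_mod_cast (contDiff_zero (𝕜 := ℝ)).2 this
  | succ n ih =>
    intro G _ _ F hF
    have h1 : ContDiff ℝ 1 F := hF.of_le (by exact_mod_cast le_top)
    refine contDiff_succ_iff_hasFDerivAt.2 ⟨_, ?_, fun p => hasFDerivAt_param F h1 p⟩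
    apply ih (fun z : E × ℝ => fderiv ℝ (fun p => F (p, z.2)) z.1)
    have hd : ∀ z : E × ℝ, fderiv ℝ (fun p => F (p, z.2)) z.1
        = (fderiv ℝ F z).comp (ContinuousLinearMap.inl ℝ E ℝ) := by
      intro z
      exact (((h1.differentiable one_ne_zero) (z.1, z.2)).hasFDerivAt.comp z.1
        (hasFDerivAt_prodMk_left z.1 z.2)).fderiv
    simp_rw [hd]
    have : ContDiff ℝ ∞ (fderiv ℝ F) := hF.fderiv_right (by simp)
    fun_prop

theorem contDiff_param_top {E : Type} [NormedAddCommGroup E] [NormedSpace ℝ E]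
    [FiniteDimensional ℝ E] {G : Type} [NormedAddCommGroup G] [NormedSpace ℝ G]
    (F : E × ℝ → G) (hF : ContDiff ℝ ∞ F) :
    ContDiff ℝ ∞ (fun p => ∫ s in (0:ℝ)..1, F (p, s)) :=
  contDiff_infty.2 fun n => contDiff_param n F hF

/-- The space `(t, x, v)`. -/
abbrev J (q : ℕ) := ℝ × (Fin q → ℝ) × (Fin q → ℝ)

/-- Smooth functions of `(t, x, v)`. -/
def Sm (q : ℕ) : Submodule ℝ (J q → ℝ) where
  carrier := {F | ContDiff ℝ ∞ F}
  add_mem' := by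
    intro a b ha hb
    exact ContDiff.add (Set.mem_ofPred_eq ▸ ha) (Set.mem_ofPred_eq ▸ hb)
  zero_mem' := by
    rw [Set.mem_ofPred_eq]
    exact contDiff_const (c := (0:ℝ))
  smul_mem' := by
    intro r F hF
    rw [Set.mem_ofPred_eq] at *
    exact ContDiff.const_smul r hF

variable {q : ℕ}

theorem cd (F : Sm q) : ContDiff ℝ ∞ F.1 := F.2

theorem dff (F : Sm q) : Differentiable ℝ F.1 := (cd F).differentiable (by simp)

/-- Derivative along a smooth vector field. -/
def LieD (w : J q → J q) (hw : ContDiff ℝ ∞ w) : Sm q →ₗ[ℝ] Sm q where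
  toFun F := ⟨fun p => fderiv ℝ F.1 p (w p), by
    have : ContDiff ℝ ∞ (fderiv ℝ F.1) := (cd F).fderiv_right (by simp)
    exact this.clm_apply hw⟩
  map_add' F G := by
    ext p
    simp [fderiv_add (dff F p) (dff G p)]
  map_smul' r F := by
    ext p
    simp [fderiv_const_smul (dff F p) r]

theorem LieD_apply (w : J q → J q) (hw : ContDiff ℝ ∞ w) (F : Sm q) (p : J q) :
    (LieD w hw F).1 p = fderiv ℝ F.1 p (w p) := rfl

/-- Derivative in `x^a`. -/
def X (a : Fin q) : Sm q →ₗ[ℝ] Sm q :=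
  LieD (fun _ => (0, Pi.single a 1, 0)) contDiff_const

/-- Derivative in `v^a`. -/
def V (a : Fin q) : Sm q →ₗ[ℝ] Sm q :=
  LieD (fun _ => (0, 0, Pi.single a 1)) contDiff_const

/-- The operator `D₁`. -/
def D : Sm q →ₗ[ℝ] Sm q :=
  LieD (fun p => (1, p.2.2, 0)) (by fun_prop)

theorem X_apply (a : Fin q) (F : Sm q) (p : J q) :
    (X a F).1 p = fderiv ℝ F.1 p (0, Pi.single a 1, 0) := rfl
theorem V_apply (a : Fin q) (F : Sm q) (p : J q) :
    (V a F).1 p = fderiv ℝ F.1 p (0, 0, Pi.single a 1) := rfl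
theorem D_apply (F : Sm q) (p : J q) :
    (D F).1 p = fderiv ℝ F.1 p (1, p.2.2, 0) := rfl

theorem LieD_LieD (w₁ w₂ : J q → J q) (h₁ : ContDiff ℝ ∞ w₁) (h₂ : ContDiff ℝ ∞ w₂)
    (F : Sm q) (p : J q) :
    (LieD w₁ h₁ (LieD w₂ h₂ F)).1 p =
      fderiv ℝ (fderiv ℝ F.1) p (w₁ p) (w₂ p) + fderiv ℝ F.1 p (fderiv ℝ w₂ p (w₁ p)) := by
  rw [LieD_apply]
  have h : ContDiff ℝ ∞ (fderiv ℝ F.1) := (cd F).fderiv_right (by simp)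
  have := (h.differentiable (by simp) p).hasFDerivAt.clm_apply
    (h₂.differentiable (by simp) p).hasFDerivAt
  change fderiv ℝ (fun p => fderiv ℝ F.1 p (w₂ p)) p (w₁ p) = _
  rw [this.fderiv]
  simp [add_comm]

theorem symm2 (F : Sm q) (p u w : J q) :
    fderiv ℝ (fderiv ℝ F.1) p u w = fderiv ℝ (fderiv ℝ F.1) p w u :=
  ((contDiff_infty.1 (cd F) 2).contDiffAt.isSymmSndFDerivAt (by simp)) u w

theorem V_V (a b : Fin q) (F : Sm q) : V a (V b F) = V b (V a F) := by
  ext p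
  simp only [V, LieD_LieD]
  rw [symm2]; simp
theorem X_X (a b : Fin q) (F : Sm q) : X a (X b F) = X b (X a F) := by
  ext p
  simp only [X, LieD_LieD]
  rw [symm2]; simp
theorem V_X (a b : Fin q) (F : Sm q) : V a (X b F) = X b (V a F) := by
  ext p
  simp only [V, X, LieD_LieD]
  rw [symm2]; simp

theorem fderiv_Dfield (p u : J q) :
    fderiv ℝ (fun p : J q => ((1, p.2.2, 0) : J q)) p u = (0, u.2.2, 0) := by
  have h : HasFDerivAt (fun p : J q => p.2.2)
      ((ContinuousLinearMap.snd ℝ _ _).comp (ContinuousLinearMap.snd ℝ _ _)) p :=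
    hasFDerivAt_snd.comp p hasFDerivAt_snd
  have := (hasFDerivAt_const (1:ℝ) p).prodMk (h.prodMk (hasFDerivAt_const (0 : Fin q → ℝ) p))
  rw [this.fderiv]
  simp

theorem V_D (a : Fin q) (F : Sm q) : V a (D F) = D (V a F) + X a F := by
  ext p
  simp only [V, D, X, Submodule.coe_add, Pi.add_apply, LieD_LieD]
  rw [symm2, fderiv_Dfield]
  simp [LieD_apply]
theorem X_D (a : Fin q) (F : Sm q) : X a (D F) = D (X a F) := by
  ext p
  simp only [D, X, LieD_LieD]
  rw [symm2, fderiv_Dfield]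
  have h0 : ((0, 0, 0) : J q) = 0 := rfl
  simp [h0]

/-- Coordinate expansion of the derivative. -/
theorem fderiv_expand (F : Sm q) (p : J q) (y z : Fin q → ℝ) :
    fderiv ℝ F.1 p (0, y, z) = ∑ b, (y b * (X b F).1 p + z b * (V b F).1 p) := by
  have h : ((0, y, z) : J q) = ∑ b, (y b • ((0, Pi.single b 1, 0) : J q)
      + z b • ((0, 0, Pi.single b 1) : J q)) := by
    refine Prod.ext ?_ (Prod.ext ?_ ?_)
    · simp [Prod.fst_sum]
    · ext i; simp [Prod.fst_sum, Prod.snd_sum, Pi.single_apply]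
    · ext i; simp [Prod.snd_sum, Pi.single_apply]
  rw [h, map_sum]
  simp only [map_add, map_smul, X_apply, V_apply, smul_eq_mul]

/-- Functions vanishing on an open set have vanishing derivatives there. -/
theorem LieD_zero {W : Set (J q)} (hW : IsOpen W) (w : J q → J q) (hw : ContDiff ℝ ∞ w)
    {F : Sm q} (hF : ∀ p ∈ W, F.1 p = 0) : ∀ p ∈ W, (LieD w hw F).1 p = 0 := by
  intro p hp
  rw [LieD_apply]
  have : F.1 =ᶠ[𝓝 p] fun _ => 0 := by
    filter_upwards [hW.mem_nhds hp] with x hx using hF x hx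
  rw [this.fderiv_eq]; simp

theorem homG_smooth (ℓ : J q → Fin q → ℝ) (hℓ : ContDiff ℝ ∞ ℓ)
    (Φ : ℝ → J q → J q) (hΦ : ContDiff ℝ ∞ (fun z : J q × ℝ => Φ z.2 z.1)) (k : ℕ)
    (F : Fin q → Sm q) :
    ContDiff ℝ ∞ (fun z : J q × ℝ => z.2 ^ k * ∑ b, ℓ z.1 b * (F b).1 (Φ z.2 z.1)) := by
  refine (contDiff_snd.pow k).mul (ContDiff.sum fun b _ => ContDiff.mul ?_ ?_)
  · exact (contDiff_apply ℝ ℝ b).comp (hℓ.comp contDiff_fst)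
  · exact (cd (F b)).comp hΦ

/-- The homotopy operator. -/
def homF (ℓ : J q → Fin q → ℝ) (hℓ : ContDiff ℝ ∞ ℓ)
    (Φ : ℝ → J q → J q) (hΦ : ContDiff ℝ ∞ (fun z : J q × ℝ => Φ z.2 z.1)) (k : ℕ)
    (F : Fin q → Sm q) : Sm q :=
  ⟨fun p => ∫ s in (0:ℝ)..1, s ^ k * ∑ b, ℓ p b * (F b).1 (Φ s p),
    contDiff_param_top _ (homG_smooth ℓ hℓ Φ hΦ k F)⟩

theorem homF_fderiv (ℓ : J q → Fin q → ℝ) (hℓ : ContDiff ℝ ∞ ℓ)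
    (Φ : ℝ → J q → J q) (hΦ : ContDiff ℝ ∞ (fun z : J q × ℝ => Φ z.2 z.1)) (k : ℕ)
    (F : Fin q → Sm q) (p e : J q) :
    fderiv ℝ (homF ℓ hℓ Φ hΦ k F).1 p e = ∫ s in (0:ℝ)..1, s ^ k * ∑ b,
      (fderiv ℝ ℓ p e b * (F b).1 (Φ s p)
        + ℓ p b * fderiv ℝ (F b).1 (Φ s p) (fderiv ℝ (Φ s) p e)) := by
  have hG := homG_smooth ℓ hℓ Φ hΦ k F
  have hG1 : ContDiff ℝ 1 (fun z : J q × ℝ => z.2 ^ k * ∑ b, ℓ z.1 b * (F b).1 (Φ z.2 z.1)) :=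
    hG.of_le (by exact_mod_cast le_top)
  have h := hasFDerivAt_param _ hG1 p
  have h2 : fderiv ℝ (homF ℓ hℓ Φ hΦ k F).1 p = _ := h.fderiv
  rw [h2, ContinuousLinearMap.intervalIntegral_apply]
  · congr 1
    ext s
    have hΦs : HasFDerivAt (Φ s) (fderiv ℝ (Φ s) p) p := by
      have : ContDiff ℝ ∞ (fun p => Φ s p) := hΦ.comp (contDiff_id.prodMk contDiff_const)
      exact (this.differentiable (by simp) p).hasFDerivAt
    have hℓp : HasFDerivAt ℓ (fderiv ℝ ℓ p) p := (hℓ.differentiable (by simp) p).hasFDerivAt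
    have hsum := HasFDerivAt.fun_sum (u := Finset.univ) (x := p)
      (A := fun b p => ℓ p b * (F b).1 (Φ s p)) (fun b _ =>
        ((hasFDerivAt_pi'.1 hℓp) b).mul
          (((dff (F b) (Φ s p)).hasFDerivAt.comp p hΦs)))
    have := (hsum.const_mul (s ^ k)).fderiv
    rw [this]
    simp only [smul_apply, sum_apply, smul_eq_mul,
      add_apply, ContinuousLinearMap.comp_apply,
      ContinuousLinearMap.proj_apply]
    congr 1
    refine Finset.sum_congr rfl fun b _ => ?_
    ring
  · have hd : ∀ s : ℝ, fderiv ℝ (fun p => s ^ k * ∑ b, ℓ p b * (F b).1 (Φ s p)) p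
        = (fderiv ℝ (fun z : J q × ℝ => z.2 ^ k * ∑ b, ℓ z.1 b * (F b).1 (Φ z.2 z.1))
          (p, s)).comp (ContinuousLinearMap.inl ℝ (J q) ℝ) := by
      intro s
      have hl := hasFDerivAt_prodMk_left (𝕜 := ℝ) p s
      have hc := ((hG1.differentiable one_ne_zero) (p, s)).hasFDerivAt.comp p hl
      exact hc.fderiv
    simp_rw [hd]
    have := hG1.continuous_fderiv one_ne_zero
    exact Continuous.intervalIntegrable (by fun_prop) _ _

theorem ftc (Φ : ℝ → J q → J q) (k : ℕ)
    (f : Sm q) (p w : J q) (hw : ∀ s, HasDerivAt (fun s => Φ s p) w s) :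
    ∫ s in (0:ℝ)..1, (((k:ℝ) + 1) * s ^ k * f.1 (Φ s p)
      + s ^ (k + 1) * fderiv ℝ f.1 (Φ s p) w) = f.1 (Φ 1 p) := by
  have hc : Continuous (fun s => Φ s p) :=
    continuous_iff_continuousAt.2 fun s => (hw s).continuousAt
  have hd : ∀ s ∈ Set.uIcc (0:ℝ) 1, HasDerivAt (fun s => s ^ (k + 1) * f.1 (Φ s p))
      (((k:ℝ) + 1) * s ^ k * f.1 (Φ s p) + s ^ (k + 1) * fderiv ℝ f.1 (Φ s p) w) s := by
    intro s _
    have h1 := hasDerivAt_pow (k + 1) s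
    have h2 := (dff f (Φ s p)).hasFDerivAt.comp_hasDerivAt s (hw s)
    have := h1.mul h2
    simp only [Nat.add_sub_cancel, Nat.cast_add, Nat.cast_one] at this
    exact this
  rw [intervalIntegral.integral_eq_sub_of_hasDerivAt hd]
  · simp
  · have h1 : Continuous f.1 := (cd f).continuous
    have h2 : Continuous (fderiv ℝ f.1) := (cd f).continuous_fderiv (by simp)
    exact Continuous.intervalIntegrable (by fun_prop) _ _

/-- Centred position. -/
def yv (t₀ : ℝ) (x₀ v₀ : Fin q → ℝ) (p : J q) : Fin q → ℝ := p.2.1 - x₀ - (p.1 - t₀) • v₀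

/-- Centred velocity. -/
def zv (v₀ : Fin q → ℝ) (p : J q) : Fin q → ℝ := p.2.2 - v₀

/-- Contraction in velocities (`σ = 0`) or in positions and velocities (`σ = 1`). -/
def Phi (t₀ : ℝ) (x₀ v₀ : Fin q → ℝ) (σ s : ℝ) (p : J q) : J q :=
  (p.1, p.2.1 + ((s - 1) * σ) • yv t₀ x₀ v₀ p, v₀ + s • zv v₀ p)

theorem yv_smooth (t₀ : ℝ) (x₀ v₀ : Fin q → ℝ) : ContDiff ℝ ∞ (yv t₀ x₀ v₀) := by
  unfold yv; fun_prop
theorem zv_smooth (v₀ : Fin q → ℝ) : ContDiff ℝ ∞ (zv v₀) := by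
  unfold zv; fun_prop
theorem Phi_smooth (t₀ : ℝ) (x₀ v₀ : Fin q → ℝ) (σ : ℝ) :
    ContDiff ℝ ∞ (fun z : J q × ℝ => Phi t₀ x₀ v₀ σ z.2 z.1) := by
  unfold Phi yv zv; fun_prop

theorem Phi_one (t₀ : ℝ) (x₀ v₀ : Fin q → ℝ) (σ : ℝ) (p : J q) : Phi t₀ x₀ v₀ σ 1 p = p := by
  simp [Phi, zv]

theorem Phi_deriv (t₀ : ℝ) (x₀ v₀ : Fin q → ℝ) (σ : ℝ) (p : J q) (s : ℝ) :
    HasDerivAt (fun s => Phi t₀ x₀ v₀ σ s p) (0, σ • yv t₀ x₀ v₀ p, zv v₀ p) s := by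
  refine HasDerivAt.prodMk (hasDerivAt_const _ _) (HasDerivAt.prodMk ?_ ?_)
  · have h : HasDerivAt (fun s : ℝ => (s - 1) * σ) σ s := by
      simpa using ((hasDerivAt_id s).sub_const 1).mul_const σ
    exact (h.smul_const (yv t₀ x₀ v₀ p)).const_add _
  · simpa using ((hasDerivAt_id s).smul_const (zv v₀ p)).const_add v₀

theorem yv_fderiv (t₀ : ℝ) (x₀ v₀ : Fin q → ℝ) (p e : J q) :
    fderiv ℝ (yv t₀ x₀ v₀) p e = e.2.1 - e.1 • v₀ := by
  have h1 : HasFDerivAt (fun p : J q => p.2.1)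
      ((ContinuousLinearMap.fst ℝ _ _).comp (ContinuousLinearMap.snd ℝ _ _)) p :=
    hasFDerivAt_fst.comp p hasFDerivAt_snd
  have h2 : HasFDerivAt (fun p : J q => p.1) (ContinuousLinearMap.fst ℝ _ _) p := hasFDerivAt_fst
  have := (h1.sub_const x₀).sub ((h2.sub_const t₀).smul_const v₀)
  have h3 : fderiv ℝ (yv t₀ x₀ v₀) p = _ := this.fderiv
  rw [h3]; simp

theorem zv_fderiv (v₀ : Fin q → ℝ) (p e : J q) :
    fderiv ℝ (zv v₀) p e = e.2.2 := by
  have h1 : HasFDerivAt (fun p : J q => p.2.2)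
      ((ContinuousLinearMap.snd ℝ _ _).comp (ContinuousLinearMap.snd ℝ _ _)) p :=
    hasFDerivAt_snd.comp p hasFDerivAt_snd
  have h3 : fderiv ℝ (zv v₀) p = _ := (h1.sub_const v₀).fderiv
  rw [h3]; simp

theorem Phi_fderiv (t₀ : ℝ) (x₀ v₀ : Fin q → ℝ) (σ s : ℝ) (p e : J q) :
    fderiv ℝ (Phi t₀ x₀ v₀ σ s) p e
      = (e.1, e.2.1 + ((s - 1) * σ) • (e.2.1 - e.1 • v₀), s • e.2.2) := by
  have h1 : HasFDerivAt (fun p : J q => p.2.1)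
      ((ContinuousLinearMap.fst ℝ _ _).comp (ContinuousLinearMap.snd ℝ _ _)) p :=
    hasFDerivAt_fst.comp p hasFDerivAt_snd
  have h2 : HasFDerivAt (fun p : J q => p.1) (ContinuousLinearMap.fst ℝ _ _) p := hasFDerivAt_fst
  have hy := ((yv_smooth t₀ x₀ v₀).differentiable (by simp) p).hasFDerivAt
  have hz := ((zv_smooth v₀).differentiable (by simp) p).hasFDerivAt
  have := h2.prodMk ((h1.add (hy.const_smul ((s - 1) * σ))).prodMk
    ((hz.const_smul s).const_add v₀))
  have h3 : fderiv ℝ (Phi t₀ x₀ v₀ σ s) p = _ := this.fderiv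
  rw [h3]
  simp [yv_fderiv, zv_fderiv]

/-- Homotopy operator in the velocities. -/
def hz (t₀ : ℝ) (x₀ v₀ : Fin q → ℝ) (k : ℕ) (F : Fin q → Sm q) : Sm q :=
  homF (zv v₀) (zv_smooth v₀) (Phi t₀ x₀ v₀ 0) (Phi_smooth t₀ x₀ v₀ 0) k F

/-- Homotopy operator in positions and velocities. -/
def hy (t₀ : ℝ) (x₀ v₀ : Fin q → ℝ) (k : ℕ) (F : Fin q → Sm q) : Sm q :=
  homF (yv t₀ x₀ v₀) (yv_smooth t₀ x₀ v₀) (Phi t₀ x₀ v₀ 1) (Phi_smooth t₀ x₀ v₀ 1) k F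

theorem V_hz (t₀ : ℝ) (x₀ v₀ : Fin q → ℝ) (k : ℕ) (F : Fin q → Sm q) (a : Fin q) (p : J q) :
    (V a (hz t₀ x₀ v₀ k F)).1 p = ∫ s in (0:ℝ)..1, (s ^ k * (F a).1 (Phi t₀ x₀ v₀ 0 s p)
      + s ^ (k + 1) * ∑ b, zv v₀ p b * (V a (F b)).1 (Phi t₀ x₀ v₀ 0 s p)) := by
  rw [V_apply, hz, homF_fderiv]
  congr 1
  ext s
  simp only [zv_fderiv, Phi_fderiv]
  have h1 : ∀ b, fderiv ℝ (F b).1 (Phi t₀ x₀ v₀ 0 s p)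
      (0, 0 + ((s - 1) * 0) • ((0 : Fin q → ℝ) - (0:ℝ) • v₀), s • Pi.single a (1:ℝ))
      = s * (V a (F b)).1 (Phi t₀ x₀ v₀ 0 s p) := by
    intro b
    rw [V_apply]
    refine Eq.trans ?_ ((fderiv ℝ (F b).1 _).map_smul s _)
    congr 1
    simp
  simp only [h1, Finset.sum_add_distrib, mul_add, Finset.mul_sum]
  congr 1
  · simp [Pi.single_apply]
  · refine Finset.sum_congr rfl fun b _ => ?_
    ring

theorem V_hy (t₀ : ℝ) (x₀ v₀ : Fin q → ℝ) (k : ℕ) (F : Fin q → Sm q) (a : Fin q) :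
    V a (hy t₀ x₀ v₀ k F) = hy t₀ x₀ v₀ (k + 1) (fun b => V a (F b)) := by
  ext p
  rw [V_apply, hy, homF_fderiv]
  change _ = ∫ s in (0:ℝ)..1, s ^ (k + 1) * ∑ b, yv t₀ x₀ v₀ p b *
    (V a (F b)).1 (Phi t₀ x₀ v₀ 1 s p)
  congr 1
  ext s
  simp only [yv_fderiv, Phi_fderiv]
  have h1 : ∀ b, fderiv ℝ (F b).1 (Phi t₀ x₀ v₀ 1 s p)
      (0, 0 + ((s - 1) * 1) • ((0 : Fin q → ℝ) - (0:ℝ) • v₀), s • Pi.single a (1:ℝ))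
      = s * (V a (F b)).1 (Phi t₀ x₀ v₀ 1 s p) := by
    intro b
    rw [V_apply]
    refine Eq.trans ?_ ((fderiv ℝ (F b).1 _).map_smul s _)
    congr 1
    simp
  simp only [h1, mul_add, Finset.mul_sum]
  refine Finset.sum_congr rfl fun b _ => ?_
  simp
  ring

theorem X_hy (t₀ : ℝ) (x₀ v₀ : Fin q → ℝ) (k : ℕ) (F : Fin q → Sm q) (a : Fin q) (p : J q) :
    (X a (hy t₀ x₀ v₀ k F)).1 p = ∫ s in (0:ℝ)..1, (s ^ k * (F a).1 (Phi t₀ x₀ v₀ 1 s p)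
      + s ^ (k + 1) * ∑ b, yv t₀ x₀ v₀ p b * (X a (F b)).1 (Phi t₀ x₀ v₀ 1 s p)) := by
  rw [X_apply, hy, homF_fderiv]
  congr 1
  ext s
  simp only [yv_fderiv, Phi_fderiv]
  have h1 : ∀ b, fderiv ℝ (F b).1 (Phi t₀ x₀ v₀ 1 s p)
      (0, Pi.single a 1 + ((s - 1) * 1) • (Pi.single a (1:ℝ) - (0:ℝ) • v₀),
        s • (0 : Fin q → ℝ))
      = s * (X a (F b)).1 (Phi t₀ x₀ v₀ 1 s p) := by
    intro b
    rw [X_apply]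
    refine Eq.trans ?_ ((fderiv ℝ (F b).1 _).map_smul s _)
    congr 1
    simp [sub_smul]
  simp only [h1, Finset.sum_add_distrib, mul_add, Finset.mul_sum]
  congr 1
  · simp [Pi.single_apply]
  · refine Finset.sum_congr rfl fun b _ => ?_
    ring

theorem D_hy (t₀ : ℝ) (x₀ v₀ : Fin q → ℝ) (k : ℕ) (F : Fin q → Sm q) (p : J q) :
    (D (hy t₀ x₀ v₀ k F)).1 p = ∫ s in (0:ℝ)..1, s ^ k * ∑ b,
      (zv v₀ p b * (F b).1 (Phi t₀ x₀ v₀ 1 s p)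
      + yv t₀ x₀ v₀ p b * (D (F b)).1 (Phi t₀ x₀ v₀ 1 s p)) := by
  rw [D_apply, hy, homF_fderiv]
  congr 1
  ext s
  simp only [yv_fderiv, Phi_fderiv]
  congr 1
  refine Finset.sum_congr rfl fun b _ => ?_
  congr 1
  · simp [zv]
  · rw [D_apply]
    congr 2
    simp only [Phi, zv]
    refine Prod.ext rfl (Prod.ext ?_ ?_)
    · ext i; simp; ring
    · simp

theorem poincare1 (t₀ : ℝ) (x₀ v₀ : Fin q → ℝ) (W : Set (J q))
    (hW : ∀ p ∈ W, ∀ s ∈ Set.Icc (0:ℝ) 1, Phi t₀ x₀ v₀ 0 s p ∈ W)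
    (β : Fin q → Sm q) (hβ : ∀ p ∈ W, ∀ a b, (V a (β b)).1 p = (V b (β a)).1 p)
    (p : J q) (hp : p ∈ W) (a : Fin q) : (V a (hz t₀ x₀ v₀ 0 β)).1 p = (β a).1 p := by
  have h := ftc (Phi t₀ x₀ v₀ 0) 0 (β a) p _ (Phi_deriv t₀ x₀ v₀ 0 p)
  rw [Phi_one] at h
  rw [← h, V_hz]
  apply intervalIntegral.integral_congr
  intro s hs
  rw [Set.uIcc_of_le zero_le_one] at hs
  have hq := hW p hp s hs
  simp only [fderiv_expand, hβ _ hq a]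
  simp

theorem poincare2 (t₀ : ℝ) (x₀ v₀ : Fin q → ℝ) (W : Set (J q))
    (hW : ∀ p ∈ W, ∀ s ∈ Set.Icc (0:ℝ) 1, Phi t₀ x₀ v₀ 0 s p ∈ W)
    (A : Fin q → Fin q → Sm q) (hskew : ∀ p ∈ W, ∀ a b, (A a b).1 p = - (A b a).1 p)
    (hA : ∀ p ∈ W, ∀ a b c,
      (V a (A b c)).1 p + (V b (A c a)).1 p + (V c (A a b)).1 p = 0)
    (hsk' : ∀ p ∈ W, ∀ a b c, (V c (A a b)).1 p = - (V c (A b a)).1 p)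
    (p : J q) (hp : p ∈ W) (a b : Fin q) :
    (V b (hz t₀ x₀ v₀ 1 (A a))).1 p - (V a (hz t₀ x₀ v₀ 1 (A b))).1 p = (A a b).1 p := by
  have h := ftc (Phi t₀ x₀ v₀ 0) 1 (A a b) p _ (Phi_deriv t₀ x₀ v₀ 0 p)
  rw [Phi_one] at h
  have hcP : Continuous fun s => Phi t₀ x₀ v₀ 0 s p :=
    (Phi_smooth t₀ x₀ v₀ 0).continuous.comp (Continuous.prodMk continuous_const continuous_id)
  have hcF : ∀ F : Sm q, Continuous fun s => F.1 (Phi t₀ x₀ v₀ 0 s p) :=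
    fun F => (cd F).continuous.comp hcP
  rw [← h, V_hz, V_hz, ← intervalIntegral.integral_sub]
  · apply intervalIntegral.integral_congr
    intro s hs
    rw [Set.uIcc_of_le zero_le_one] at hs
    have hq := hW p hp s hs
    simp only [fderiv_expand]
    have e : ∀ d, zv v₀ p d * (V d (A a b)).1 (Phi t₀ x₀ v₀ 0 s p)
        = zv v₀ p d * (V b (A a d)).1 (Phi t₀ x₀ v₀ 0 s p)
          - zv v₀ p d * (V a (A b d)).1 (Phi t₀ x₀ v₀ 0 s p) := by
      intro d
      have h1 := hA _ hq a b d
      have h2 := hsk' _ hq a d b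
      rw [← mul_sub]
      congr 1
      linarith
    have h3 := hskew _ hq a b
    simp [e, h3, Finset.sum_sub_distrib]
    ring
  · apply Continuous.intervalIntegrable
    exact ((continuous_pow _).mul (hcF _)).add ((continuous_pow _).mul
      (continuous_finsetSum _ fun d _ => continuous_const.mul (hcF _)))
  · apply Continuous.intervalIntegrable
    exact ((continuous_pow _).mul (hcF _)).add ((continuous_pow _).mul
      (continuous_finsetSum _ fun d _ => continuous_const.mul (hcF _)))

theorem tonti (t₀ : ℝ) (x₀ v₀ : Fin q → ℝ) (W : Set (J q))
    (hW : ∀ p ∈ W, ∀ s ∈ Set.Icc (0:ℝ) 1, Phi t₀ x₀ v₀ 1 s p ∈ W)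
    (c : Fin q → Sm q)
    (h1 : ∀ p ∈ W, ∀ a b, (V a (c b)).1 p = - (V b (c a)).1 p)
    (h3 : ∀ p ∈ W, ∀ a b, (X a (c b)).1 p - (D (V a (c b))).1 p = (X b (c a)).1 p)
    (p : J q) (hp : p ∈ W) (a : Fin q) :
    (X a (hy t₀ x₀ v₀ 0 c)).1 p - (D (V a (hy t₀ x₀ v₀ 0 c))).1 p = (c a).1 p := by
  have h := ftc (Phi t₀ x₀ v₀ 1) 0 (c a) p _ (Phi_deriv t₀ x₀ v₀ 1 p)
  rw [Phi_one] at h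
  have hcP : Continuous fun s => Phi t₀ x₀ v₀ 1 s p :=
    (Phi_smooth t₀ x₀ v₀ 1).continuous.comp (Continuous.prodMk continuous_const continuous_id)
  have hcF : ∀ F : Sm q, Continuous fun s => F.1 (Phi t₀ x₀ v₀ 1 s p) :=
    fun F => (cd F).continuous.comp hcP
  rw [← h, X_hy, V_hy, D_hy, ← intervalIntegral.integral_sub]
  · apply intervalIntegral.integral_congr
    intro s hs
    rw [Set.uIcc_of_le zero_le_one] at hs
    have hq := hW p hp s hs
    simp only [fderiv_expand]
    have e : ∀ d, yv t₀ x₀ v₀ p d * (X d (c a)).1 (Phi t₀ x₀ v₀ 1 s p)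
        + zv v₀ p d * (V d (c a)).1 (Phi t₀ x₀ v₀ 1 s p)
        = yv t₀ x₀ v₀ p d * (X a (c d)).1 (Phi t₀ x₀ v₀ 1 s p)
        - (zv v₀ p d * (V a (c d)).1 (Phi t₀ x₀ v₀ 1 s p)
          + yv t₀ x₀ v₀ p d * (D (V a (c d))).1 (Phi t₀ x₀ v₀ 1 s p)) := by
      intro d
      rw [← h3 _ hq a d, h1 _ hq d a]
      ring
    simp only [one_smul, e, Finset.sum_sub_distrib]
    simp
    ring
  · apply Continuous.intervalIntegrable
    exact ((continuous_pow _).mul (hcF _)).add ((continuous_pow _).mul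
      (continuous_finsetSum _ fun d _ => continuous_const.mul (hcF _)))
  · apply Continuous.intervalIntegrable
    exact (continuous_pow _).mul (continuous_finsetSum _ fun d _ =>
      (continuous_const.mul (hcF _)).add (continuous_const.mul (hcF _)))

theorem tonti_VV (t₀ : ℝ) (x₀ v₀ : Fin q → ℝ) (W : Set (J q))
    (hW : ∀ p ∈ W, ∀ s ∈ Set.Icc (0:ℝ) 1, Phi t₀ x₀ v₀ 1 s p ∈ W)
    (c : Fin q → Sm q)
    (h2 : ∀ p ∈ W, ∀ a b d, (V d (V a (c b))).1 p = 0)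
    (p : J q) (hp : p ∈ W) (a b : Fin q) :
    (V a (V b (hy t₀ x₀ v₀ 0 c))).1 p = 0 := by
  rw [V_hy, V_hy]
  change (∫ s in (0:ℝ)..1, s ^ (0 + 1 + 1) * ∑ d, yv t₀ x₀ v₀ p d *
    (V a (V b (c d))).1 (Phi t₀ x₀ v₀ 1 s p)) = 0
  refine (intervalIntegral.integral_congr (g := fun _ => (0:ℝ)) ?_).trans (by simp)
  intro s hs
  rw [Set.uIcc_of_le zero_le_one] at hs
  have hq := hW p hp s hs
  simp [h2 _ hq]

/-- The star-shaped neighbourhood. -/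
def Wset (t₀ : ℝ) (x₀ v₀ : Fin q → ℝ) (r : ℝ) : Set (J q) :=
  {p | ‖p.1 - t₀‖ < r ∧ ‖yv t₀ x₀ v₀ p‖ < r ∧ ‖zv v₀ p‖ < r}

theorem Wset_open (t₀ : ℝ) (x₀ v₀ : Fin q → ℝ) (r : ℝ) : IsOpen (Wset t₀ x₀ v₀ r) := by
  have h1 := (yv_smooth t₀ x₀ v₀).continuous
  have h2 := (zv_smooth v₀).continuous
  have h3 : Continuous fun p : J q => ‖p.1 - t₀‖ := by fun_prop
  exact (isOpen_lt h3 continuous_const).inter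
    ((isOpen_lt h1.norm continuous_const).inter (isOpen_lt h2.norm continuous_const))

theorem Wset_mem (t₀ : ℝ) (x₀ v₀ : Fin q → ℝ) (r : ℝ) (hr : 0 < r) :
    (t₀, x₀, v₀) ∈ Wset t₀ x₀ v₀ r := by
  refine ⟨?_, ?_, ?_⟩ <;> simpa [yv, zv] using hr

theorem Wset_Phi (t₀ : ℝ) (x₀ v₀ : Fin q → ℝ) (r : ℝ) (σ : ℝ) (hσ : σ = 0 ∨ σ = 1) :
    ∀ p ∈ Wset t₀ x₀ v₀ r, ∀ s ∈ Set.Icc (0:ℝ) 1,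
      Phi t₀ x₀ v₀ σ s p ∈ Wset t₀ x₀ v₀ r := by
  rintro p ⟨h1, h2, h3⟩ s ⟨hs0, hs1⟩
  have hle : ∀ u : Fin q → ℝ, ‖u‖ < r → ‖s • u‖ < r := by
    intro u hu
    rw [norm_smul, Real.norm_of_nonneg hs0]
    exact lt_of_le_of_lt (mul_le_of_le_one_left (norm_nonneg _) hs1) hu
  refine ⟨h1, ?_, ?_⟩
  · rcases hσ with rfl | rfl
    · have : yv t₀ x₀ v₀ (Phi t₀ x₀ v₀ 0 s p) = yv t₀ x₀ v₀ p := by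
        simp [yv, Phi]
      rw [this]; exact h2
    · have : yv t₀ x₀ v₀ (Phi t₀ x₀ v₀ 1 s p) = s • yv t₀ x₀ v₀ p := by
        ext i
        simp [yv, Phi]; ring
      rw [this]; exact hle _ h2
  · have : zv v₀ (Phi t₀ x₀ v₀ σ s p) = s • zv v₀ p := by
      simp [zv, Phi]
    rw [this]; exact hle _ h3

theorem Wset_small (t₀ : ℝ) (x₀ v₀ : Fin q → ℝ) (S : Set (J q)) (hS : S ∈ 𝓝 (t₀, x₀, v₀)) :
    ∃ r > 0, Wset t₀ x₀ v₀ r ⊆ S := by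
  let f : J q → J q := fun u => (t₀ + u.1, x₀ + u.1 • v₀ + u.2.1, v₀ + u.2.2)
  have hf : Continuous f := by fun_prop
  have hf0 : f 0 = (t₀, x₀, v₀) := by simp [f]
  have : f ⁻¹' S ∈ 𝓝 (0 : J q) := hf.continuousAt.preimage_mem_nhds (by rwa [hf0])
  obtain ⟨r, hr, hrS⟩ := Metric.mem_nhds_iff.1 this
  refine ⟨r, hr, ?_⟩
  rintro p ⟨h1, h2, h3⟩
  have hm : ((p.1 - t₀, yv t₀ x₀ v₀ p, zv v₀ p) : J q) ∈ Metric.ball (0 : J q) r := by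
    rw [mem_ball_zero_iff, Prod.norm_def, Prod.norm_def]
    exact max_lt h1 (max_lt h2 h3)
  have := hrS hm
  have hp : f (p.1 - t₀, yv t₀ x₀ v₀ p, zv v₀ p) = p := by
    refine Prod.ext ?_ (Prod.ext ?_ ?_)
    · simp [f]
    · ext i; simp [f, yv]
    · simp [f, zv]
  rw [Set.mem_preimage, hp] at this
  exact this

theorem V_zero {W : Set (J q)} (hW : IsOpen W) (a : Fin q)
    {F : Sm q} (hF : ∀ p ∈ W, F.1 p = 0) : ∀ p ∈ W, (V a F).1 p = 0 := LieD_zero hW _ _ hF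
theorem X_zero {W : Set (J q)} (hW : IsOpen W) (a : Fin q)
    {F : Sm q} (hF : ∀ p ∈ W, F.1 p = 0) : ∀ p ∈ W, (X a F).1 p = 0 := LieD_zero hW _ _ hF
theorem D_zero {W : Set (J q)} (hW : IsOpen W)
    {F : Sm q} (hF : ∀ p ∈ W, F.1 p = 0) : ∀ p ∈ W, (D F).1 p = 0 := LieD_zero hW _ _ hF

theorem ev_add (F G : Sm q) (p : J q) : (F + G).1 p = F.1 p + G.1 p := rfl
theorem ev_sub (F G : Sm q) (p : J q) : (F - G).1 p = F.1 p - G.1 p := rfl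
theorem ev_neg (F : Sm q) (p : J q) : (-F).1 p = -F.1 p := rfl

theorem potentials (t₀ : ℝ) (x₀ v₀ : Fin q → ℝ) (W : Set (J q)) (hWo : IsOpen W)
    (hW0 : ∀ p ∈ W, ∀ s ∈ Set.Icc (0:ℝ) 1, Phi t₀ x₀ v₀ 0 s p ∈ W)
    (hW1 : ∀ p ∈ W, ∀ s ∈ Set.Icc (0:ℝ) 1, Phi t₀ x₀ v₀ 1 s p ∈ W)
    (A B : Fin q → Fin q → Sm q) (c : Fin q → Sm q)
    (hsk : ∀ a b, A a b = - A b a)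
    (h1 : ∀ p ∈ W, ∀ a b c,
      (V a (A b c)).1 p + (V b (A c a)).1 p + (V c (A a b)).1 p = 0)
    (h2 : ∀ p ∈ W, ∀ a b, (B a b).1 p - (B b a).1 p - 3 * (D (A a b)).1 p = 0)
    (h3 : ∀ p ∈ W, ∀ a b c, (V a (B b c)).1 p - (V b (B a c)).1 p
      - 2 * ((X a (A b c)).1 p - (X b (A a c)).1 p) + (X c (A a b)).1 p
      + 2 * (D (V c (A a b))).1 p = 0)
    (h4 : ∀ p ∈ W, ∀ a b, (V a (c b)).1 p + (V b (c a)).1 p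
      - (D (B a b)).1 p - (D (B b a)).1 p = 0)
    (h5 : ∀ p ∈ W, ∀ a b d, (V d (V a (c b))).1 p - (V d (V b (c a))).1 p
      - 2 * ((X a (B b d)).1 p - (X b (B a d)).1 p) + (D (D (V d (A a b)))).1 p
      + 2 * ((D (X a (A b d))).1 p + (D (X b (A d a))).1 p + (D (X d (A a b))).1 p) = 0)
    (h6 : ∀ p ∈ W, ∀ a b, 2 * ((X a (c b)).1 p - (X b (c a)).1 p)
      - ((D (V a (c b))).1 p - (D (V b (c a))).1 p) - (D (D (D (A a b)))).1 p = 0) :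
    ∃ (α : Fin q → Sm q) (H : Sm q), 
      (∀ p ∈ W, ∀ a b, (A a b).1 p = (V b (α a) - V a (α b)).1 p) ∧
      (∀ p ∈ W, ∀ a b, (B a b).1 p = (D (V b (α a) - V a (α b)) + X a (α b) + X b (α a)
        + D (V b (α a)) - V a (V b H)).1 p) ∧
      (∀ p ∈ W, ∀ a, (c a).1 p = (D (D (α a)) + X a H - D (V a H)).1 p) := by
  let α : Fin q → Sm q := fun a => hz t₀ x₀ v₀ 1 (A a)
  have hα : ∀ p ∈ W, ∀ a b, (V b (α a)).1 p - (V a (α b)).1 p = (A a b).1 p := by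
    intro p hp a b
    refine poincare2 t₀ x₀ v₀ W hW0 A ?_ h1 ?_ p hp a b
    · intro p _ a b; rw [hsk]; rfl
    · intro p _ a b c; rw [hsk, map_neg]; rfl
  clear_value α
  obtain ⟨Z, hZ⟩ : ∃ Z : Fin q → Fin q → Sm q, ∀ a b,
      A a b = V b (α a) - V a (α b) + Z a b :=
    ⟨fun a b => A a b - (V b (α a) - V a (α b)), fun a b => by simp⟩
  have hZ0 : ∀ a b, ∀ p ∈ W, (Z a b).1 p = 0 := by
    intro a b p hp
    have := hα p hp a b
    rw [hZ, ev_add, ev_sub] at this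
    linarith
  have hDZ := fun a b => D_zero hWo (hZ0 a b)
  have hXZ := fun d a b => X_zero hWo d (hZ0 a b)
  have hDVZ := fun d a b => D_zero hWo (V_zero hWo d (hZ0 a b))
  have hDDVZ := fun d a b => D_zero hWo (hDVZ d a b)
  have hDXZ := fun d a b => D_zero hWo (hXZ d a b)
  have hDDDZ := fun a b => D_zero hWo (D_zero hWo (hDZ a b))
  obtain ⟨B', hB'⟩ : ∃ B' : Fin q → Fin q → Sm q, ∀ a b,
      B a b = D (V b (α a) - V a (α b)) + X a (α b) + X b (α a) + D (V b (α a)) + B' a b :=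
    ⟨fun a b => B a b - (D (V b (α a) - V a (α b)) + X a (α b) + X b (α a) + D (V b (α a))),
      fun a b => by simp⟩
  have hB'sym : ∀ p ∈ W, ∀ a b, (B' a b).1 p = (B' b a).1 p := by
    intro p hp a b
    have h := h2 p hp a b
    simp only [hZ, hB', map_add, map_sub, ev_add, ev_sub, hDZ a b p hp] at h
    linarith
  have hB'cl : ∀ p ∈ W, ∀ a b d, (V a (B' b d)).1 p = (V b (B' a d)).1 p := by
    intro p hp a b d
    have h := h3 p hp a b d
    simp only [hZ, hB', map_add, map_sub, ev_add, ev_sub, hXZ _ _ _ p hp, hDVZ _ _ _ p hp,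
      V_D, V_X] at h
    simp only [V_V d a, V_V d b, V_V b a] at h ⊢
    linarith
  let f : Fin q → Sm q := fun d => hz t₀ x₀ v₀ 0 (fun a => B' a d)
  have hf : ∀ p ∈ W, ∀ a d, (V a (f d)).1 p = (B' a d).1 p := by
    intro p hp a d
    exact poincare1 t₀ x₀ v₀ W hW0 (fun a => B' a d) (fun p hp a b => hB'cl p hp a b d) p hp a
  clear_value f
  let g : Sm q := hz t₀ x₀ v₀ 0 f
  have hg : ∀ a, ∀ p ∈ W, (V a g - f a).1 p = 0 := by
    intro a p hp
    rw [ev_sub, sub_eq_zero]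
    refine poincare1 t₀ x₀ v₀ W hW0 f (fun p hp a b => ?_) p hp a
    rw [hf p hp, hf p hp, hB'sym p hp]
  clear_value g
  obtain ⟨Y, hY⟩ : ∃ Y : Fin q → Fin q → Sm q, ∀ a b, B' a b = V a (V b g) + Y a b :=
    ⟨fun a b => B' a b - V a (V b g), fun a b => by simp⟩
  have hY0 : ∀ a b, ∀ p ∈ W, (Y a b).1 p = 0 := by
    intro a b p hp
    have e1 := V_zero hWo a (hg b) p hp
    have e2 := hf p hp a b
    rw [map_sub, ev_sub] at e1
    rw [hY, ev_add] at e2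
    linarith
  have hDY := fun a b => D_zero hWo (hY0 a b)
  have hXY := fun d a b => X_zero hWo d (hY0 a b)
  obtain ⟨c', hc'⟩ : ∃ c' : Fin q → Sm q, ∀ a,
      c a = D (D (α a)) - X a g + D (V a g) + c' a :=
    ⟨fun a => c a - (D (D (α a)) - X a g + D (V a g)), fun a => by simp⟩
  have hS : ∀ a b, ∀ p ∈ W, (V a (c' b) + V b (c' a)).1 p = 0 := by
    intro a b p hp
    have h := h4 p hp a b
    simp only [hB', hc', hY, map_add, map_sub, ev_add, ev_sub, hDY _ _ p hp,
      V_D, V_X, X_D] at h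
    simp only [V_V b a] at h
    rw [ev_add]
    linarith
  have hDS := fun a b => D_zero hWo (hS a b)
  have hVS := fun d a b => V_zero hWo d (hS a b)
  have hVV : ∀ p ∈ W, ∀ a b d, (V d (V a (c' b))).1 p = 0 := by
    intro p hp a b d
    have h := h5 p hp a b d
    have hs := hVS d a b p hp
    simp only [hZ, hB', hc', hY, map_add, map_sub, ev_add, ev_sub, hXY _ _ _ p hp,
      hDDVZ _ _ _ p hp, hDXZ _ _ _ p hp, V_D, V_X, X_D] at h
    simp only [map_add, ev_add] at hs
    simp only [V_V d a, V_V d b, V_V b a, X_X d a, X_X d b, X_X b a] at h hs ⊢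
    linarith
  have hXc : ∀ p ∈ W, ∀ a b,
      (X a (c' b)).1 p - (D (V a (c' b))).1 p = (X b (c' a)).1 p := by
    intro p hp a b
    have h := h6 p hp a b
    have hs := hDS a b p hp
    simp only [hZ, hc', map_add, map_sub, ev_add, ev_sub, 
      hDDDZ _ _ p hp, V_D, V_X, X_D] at h
    simp only [map_add, ev_add] at hs
    simp only [V_V b a, X_X b a] at h hs ⊢
    linarith
  have hVc : ∀ p ∈ W, ∀ a b, (V a (c' b)).1 p = - (V b (c' a)).1 p := by
    intro p hp a b
    have := hS a b p hp
    rw [ev_add] at this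
    linarith
  refine ⟨α, - g + hy t₀ x₀ v₀ 0 c', ?_, ?_, ?_⟩
  · intro p hp a b
    exact (hα p hp a b).symm
  · intro p hp a b
    have h := tonti_VV t₀ x₀ v₀ W hW1 c' hVV p hp a b
    have h' := hY0 a b p hp
    simp only [hB', hY, map_add, map_sub, map_neg, ev_add, ev_sub, ev_neg, h, h']
    ring
  · intro p hp a
    have h := tonti t₀ x₀ v₀ W hW1 c' hVc hXc p hp a
    simp only [hc', map_add, map_sub, map_neg, ev_add, ev_sub, ev_neg]
    linarith

theorem hasDerivAt_X (F : Sm q) (a : Fin q) (t : ℝ) (x v : Fin q → ℝ) :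
    HasDerivAt (fun s : ℝ => F.1 (t, x + s • (Pi.single a 1 : Fin q → ℝ), v))
      ((X a F).1 (t, x, v)) 0 := by
  have h : HasDerivAt (fun s : ℝ => ((t, x + s • (Pi.single a 1 : Fin q → ℝ), v) : J q))
      (0, Pi.single a 1, 0) 0 := by
    refine (hasDerivAt_const _ _).prodMk (HasDerivAt.prodMk ?_ (hasDerivAt_const _ _))
    simpa using ((hasDerivAt_id (0:ℝ)).smul_const (Pi.single a 1 : Fin q → ℝ)).const_add x
  have h0 : ((t, x + (0:ℝ) • (Pi.single a 1 : Fin q → ℝ), v) : J q) = (t, x, v) := by simp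
  have hF := (dff F (t, x, v)).hasFDerivAt
  rw [← h0] at hF
  have := hF.comp_hasDerivAt (0:ℝ) h
  rw [h0] at this
  exact this

theorem hasDerivAt_V (F : Sm q) (a : Fin q) (t : ℝ) (x v : Fin q → ℝ) :
    HasDerivAt (fun s : ℝ => F.1 (t, x, v + s • (Pi.single a 1 : Fin q → ℝ)))
      ((V a F).1 (t, x, v)) 0 := by
  have h : HasDerivAt (fun s : ℝ => ((t, x, v + s • (Pi.single a 1 : Fin q → ℝ)) : J q))
      (0, 0, Pi.single a 1) 0 := by
    refine (hasDerivAt_const _ _).prodMk ((hasDerivAt_const _ _).prodMk ?_)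
    simpa using ((hasDerivAt_id (0:ℝ)).smul_const (Pi.single a 1 : Fin q → ℝ)).const_add v
  have h0 : ((t, x, v + (0:ℝ) • (Pi.single a 1 : Fin q → ℝ)) : J q) = (t, x, v) := by simp
  have hF := (dff F (t, x, v)).hasFDerivAt
  rw [← h0] at hF
  have := hF.comp_hasDerivAt (0:ℝ) h
  rw [h0] at this
  exact this

theorem hasDerivAt_T (F : Sm q) (t : ℝ) (x v : Fin q → ℝ) :
    HasDerivAt (fun s : ℝ => F.1 (s, x, v)) (fderiv ℝ F.1 (t, x, v) (1, 0, 0)) t := by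
  have h : HasDerivAt (fun s : ℝ => ((s, x, v) : J q)) (1, 0, 0) t :=
    (hasDerivAt_id t).prodMk ((hasDerivAt_const _ _).prodMk (hasDerivAt_const _ _))
  exact (dff F (t, x, v)).hasFDerivAt.comp_hasDerivAt t h

theorem hasDerivAt_curve (F : Sm q) (c c' : ℝ → Fin q → ℝ) (w : Fin q → ℝ) (t : ℝ)
    (h1 : HasDerivAt c (c' t) t) (h2 : HasDerivAt c' w t) :
    HasDerivAt (fun τ => F.1 (τ, c τ, c' τ))
      ((D F).1 (t, c t, c' t) + ∑ b, w b * (V b F).1 (t, c t, c' t)) t := by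
  have h : HasDerivAt (fun s : ℝ => ((s, c s, c' s) : J q)) (1, c' t, w) t :=
    (hasDerivAt_id t).prodMk (h1.prodMk h2)
  have h3 := (dff F (t, c t, c' t)).hasFDerivAt.comp_hasDerivAt t h
  have e : ((1, c' t, w) : J q) = (1, c' t, 0) + (0, 0, w) := by simp
  rw [e, map_add, fderiv_expand] at h3
  simp only [Pi.zero_apply, zero_mul, zero_add] at h3
  exact h3

/-- The Lagrangian, affine in the acceleration. -/
def Lag (α : Fin q → Sm q) (H : Sm q) (t : ℝ) (x v w : Fin q → ℝ) : ℝ :=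
  ∑ b, (α b).1 (t, x, v) * w b + H.1 (t, x, v)

theorem pLx_Lag (α : Fin q → Sm q) (H : Sm q) (a : Fin q) (t : ℝ) (x v w : Fin q → ℝ) :
    pLx a (Lag α H) t x v w = ∑ b, (X a (α b)).1 (t, x, v) * w b + (X a H).1 (t, x, v) := by
  refine HasDerivAt.deriv ?_
  exact (HasDerivAt.fun_sum fun b _ => (hasDerivAt_X (α b) a t x v).mul_const (w b)).add
    (hasDerivAt_X H a t x v)

theorem pLv_Lag (α : Fin q → Sm q) (H : Sm q) (a : Fin q) (t : ℝ) (x v w : Fin q → ℝ) :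
    pLv a (Lag α H) t x v w = ∑ b, (V a (α b)).1 (t, x, v) * w b + (V a H).1 (t, x, v) := by
  refine HasDerivAt.deriv ?_
  exact (HasDerivAt.fun_sum fun b _ => (hasDerivAt_V (α b) a t x v).mul_const (w b)).add
    (hasDerivAt_V H a t x v)

theorem pLw_Lag (α : Fin q → Sm q) (H : Sm q) (a : Fin q) (t : ℝ) (x v w : Fin q → ℝ) :
    pLw a (Lag α H) t x v w = (α a).1 (t, x, v) := by
  refine HasDerivAt.deriv ?_
  have h : HasDerivAt (fun s : ℝ => w + s • (Pi.single a 1 : Fin q → ℝ)) (Pi.single a 1) 0 := by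
    simpa using ((hasDerivAt_id (0:ℝ)).smul_const (Pi.single a 1 : Fin q → ℝ)).const_add w
  have := (HasDerivAt.fun_sum (u := Finset.univ) fun b _ =>
    (hasDerivAt_pi.1 h b).const_mul ((α b).1 (t, x, v))).add_const (H.1 (t, x, v))
  have e : (α a).1 (t, x, v) = ∑ b, (α b).1 (t, x, v) * (Pi.single a 1 : Fin q → ℝ) b := by
    simp [Pi.single_apply]
  rw [e]
  exact this

theorem Lag_smooth (α : Fin q → Sm q) (H : Sm q) : ContDiff ℝ ∞
    (fun p : ℝ × (Fin q → ℝ) × (Fin q → ℝ) × (Fin q → ℝ) =>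
      Lag α H p.1 p.2.1 p.2.2.1 p.2.2.2) := by
  have hp : ContDiff ℝ ∞ (fun p : ℝ × (Fin q → ℝ) × (Fin q → ℝ) × (Fin q → ℝ) =>
      ((p.1, p.2.1, p.2.2.1) : J q)) := by fun_prop
  unfold Lag
  refine ContDiff.add (ContDiff.sum fun b _ => ((cd (α b)).comp hp).mul ?_) ((cd H).comp hp)
  fun_prop

theorem euler_Lag (α : Fin q → Sm q) (H : Sm q) (I : Set ℝ) (hI : IsOpen I)
    (c : ℝ → Fin q → ℝ) (hc : ContDiffOn ℝ ∞ c I) (t : ℝ) (ht : t ∈ I) (a : Fin q) :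
    eulerPoisson (Lag α H) c t a =
      (∑ b, (V b (α a) - V a (α b)).1 (t, c t, deriv c t) * deriv (deriv (deriv c)) t b)
      + (∑ d, ∑ b, deriv (deriv c) t d * (V d (V b (α a) - V a (α b))).1 (t, c t, deriv c t)
          * deriv (deriv c) t b)
      + (∑ b, (D (V b (α a) - V a (α b)) + X a (α b) + X b (α a)
        + D (V b (α a)) - V a (V b H)).1 (t, c t, deriv c t) * deriv (deriv c) t b)
      + (D (D (α a)) + X a H - D (V a H)).1 (t, c t, deriv c t) := by
  have hc1 := ((contDiffOn_infty_iff_deriv_of_isOpen hI).1 hc)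
  have hc2 := ((contDiffOn_infty_iff_deriv_of_isOpen hI).1 hc1.2)
  have hc3 := ((contDiffOn_infty_iff_deriv_of_isOpen hI).1 hc2.2)
  have d1 : ∀ t ∈ I, HasDerivAt c (deriv c t) t := fun t ht =>
    (hc1.1.differentiableAt (hI.mem_nhds ht)).hasDerivAt
  have d2 : ∀ t ∈ I, HasDerivAt (deriv c) (deriv (deriv c) t) t := fun t ht =>
    (hc2.1.differentiableAt (hI.mem_nhds ht)).hasDerivAt
  have d3 : ∀ t ∈ I, HasDerivAt (deriv (deriv c)) (deriv (deriv (deriv c)) t) t := fun t ht =>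
    (hc3.1.differentiableAt (hI.mem_nhds ht)).hasDerivAt
  have dF : ∀ F : Sm q, ∀ t ∈ I, HasDerivAt (fun τ => F.1 (τ, c τ, deriv c τ))
      ((D F).1 (t, c t, deriv c t)
        + ∑ b, deriv (deriv c) t b * (V b F).1 (t, c t, deriv c t)) t :=
    fun F t ht => hasDerivAt_curve F c (deriv c) _ t (d1 t ht) (d2 t ht)
  have dw : ∀ b, HasDerivAt (fun τ => deriv (deriv c) τ b) (deriv (deriv (deriv c)) t b) t :=
    hasDerivAt_pi.1 (d3 t ht)
  unfold eulerPoisson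
  simp only [pLx_Lag, pLv_Lag, pLw_Lag]
  have T2 := ((HasDerivAt.fun_sum (u := Finset.univ) fun b _ =>
    (dF (V a (α b)) t ht).mul (dw b)).add (dF (V a H) t ht)).deriv
  have T3a : deriv (fun τ => (α a).1 (τ, c τ, deriv c τ)) =ᶠ[𝓝 t] fun τ =>
      (D (α a)).1 (τ, c τ, deriv c τ)
        + ∑ b, deriv (deriv c) τ b * (V b (α a)).1 (τ, c τ, deriv c τ) := by
    filter_upwards [hI.mem_nhds ht] with τ hτ using (dF (α a) τ hτ).deriv
  have T3 := ((dF (D (α a)) t ht).add (HasDerivAt.fun_sum (u := Finset.univ) fun b _ =>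
    (dw b).mul (dF (V b (α a)) t ht))).deriv
  have T2' : deriv (fun τ => ∑ b, (V a (α b)).1 (τ, c τ, deriv c τ) * deriv (deriv c) τ b
      + (V a H).1 (τ, c τ, deriv c τ)) t = _ := T2
  have T3' : deriv (fun τ => (D (α a)).1 (τ, c τ, deriv c τ)
        + ∑ b, deriv (deriv c) τ b * (V b (α a)).1 (τ, c τ, deriv c τ)) t = _ := T3
  rw [T2', T3a.deriv_eq, T3', Finset.sum_comm]
  simp only [V_D, map_sub, ev_add, ev_sub, fun b => V_V a b H]
  generalize deriv (deriv (deriv c)) t = u3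
  generalize deriv (deriv c) t = u2
  generalize (t, c t, deriv c t) = p
  have hR : ∀ b, (∑ d, u2 d * ((V d (V b (α a))).1 p - (V d (V a (α b))).1 p) * u2 b)
      = (∑ d, u2 d * (V d (V b (α a))).1 p) * u2 b
        - (∑ d, u2 d * (V d (V a (α b))).1 p) * u2 b := by
    intro b
    rw [Finset.sum_mul, Finset.sum_mul, ← Finset.sum_sub_distrib]
    exact Finset.sum_congr rfl fun d _ => by ring
  simp only [hR, add_mul, sub_mul, mul_add, Finset.sum_add_distrib, Finset.sum_sub_distrib,
    Finset.sum_mul, Finset.mul_sum]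
  simp only [mul_comm, mul_left_comm]
  ring

/-- `F` agrees with the globally smooth function `G` on `W`. -/
def Rel (W : Set (J q)) (F : ℝ → (Fin q → ℝ) → (Fin q → ℝ) → ℝ) (G : Sm q) : Prop :=
  ∀ p ∈ W, F p.1 p.2.1 p.2.2 = G.1 p

theorem Rel.pdt_eq {W : Set (J q)} (hW : IsOpen W) {F : ℝ → (Fin q → ℝ) → (Fin q → ℝ) → ℝ}
    {G : Sm q} (h : Rel W F G) (p : J q) (hp : p ∈ W) :
    pdt F p.1 p.2.1 p.2.2 = fderiv ℝ G.1 p (1, 0, 0) := by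
  refine HasDerivAt.deriv ((hasDerivAt_T G p.1 p.2.1 p.2.2).congr_of_eventuallyEq ?_)
  have hc : Continuous fun s : ℝ => ((s, p.2.1, p.2.2) : J q) := by fun_prop
  filter_upwards [hc.continuousAt.preimage_mem_nhds (hW.mem_nhds hp)] with s hs using h _ hs

theorem Rel.pdx {W : Set (J q)} (hW : IsOpen W) {F : ℝ → (Fin q → ℝ) → (Fin q → ℝ) → ℝ}
    {G : Sm q} (h : Rel W F G) (a : Fin q) : Rel W (pdx a F) (X a G) := by
  intro p hp
  refine HasDerivAt.deriv ((hasDerivAt_X G a p.1 p.2.1 p.2.2).congr_of_eventuallyEq ?_)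
  have hc : Continuous fun s : ℝ =>
      ((p.1, p.2.1 + s • (Pi.single a 1 : Fin q → ℝ), p.2.2) : J q) := by fun_prop
  have h0 : ((p.1, p.2.1 + (0:ℝ) • (Pi.single a 1 : Fin q → ℝ), p.2.2) : J q) = p := by simp
  filter_upwards [hc.continuousAt.preimage_mem_nhds (hW.mem_nhds (h0.symm ▸ hp))] with s hs
    using h _ hs

theorem Rel.pdv {W : Set (J q)} (hW : IsOpen W) {F : ℝ → (Fin q → ℝ) → (Fin q → ℝ) → ℝ}
    {G : Sm q} (h : Rel W F G) (a : Fin q) : Rel W (pdv a F) (V a G) := by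
  intro p hp
  refine HasDerivAt.deriv ((hasDerivAt_V G a p.1 p.2.1 p.2.2).congr_of_eventuallyEq ?_)
  have hc : Continuous fun s : ℝ =>
      ((p.1, p.2.1, p.2.2 + s • (Pi.single a 1 : Fin q → ℝ)) : J q) := by fun_prop
  have h0 : ((p.1, p.2.1, p.2.2 + (0:ℝ) • (Pi.single a 1 : Fin q → ℝ)) : J q) = p := by simp
  filter_upwards [hc.continuousAt.preimage_mem_nhds (hW.mem_nhds (h0.symm ▸ hp))] with s hs
    using h _ hs

theorem D_expand (G : Sm q) (p : J q) :
    (D G).1 p = fderiv ℝ G.1 p (1, 0, 0) + ∑ a, p.2.2 a * (X a G).1 p := by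
  rw [D_apply]
  have e : ((1, p.2.2, 0) : J q) = (1, 0, 0) + (0, p.2.2, 0) := by simp
  rw [e, map_add, fderiv_expand]
  simp

theorem Rel.D1 {W : Set (J q)} (hW : IsOpen W) {F : ℝ → (Fin q → ℝ) → (Fin q → ℝ) → ℝ}
    {G : Sm q} (h : Rel W F G) : Rel W (D1 F) (D G) := by
  intro p hp
  rw [D_expand, ← h.pdt_eq hW p hp]
  unfold _root_.D1
  congr 1
  exact Finset.sum_congr rfl fun a _ => by rw [h.pdx hW a p hp]

/-- Cut-off of a function smooth on an open set to a globally smooth one. -/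
def cut {p₀ : J q} (χ : ContDiffBump p₀) {Ω : Set (J q)} (hΩ : IsOpen Ω)
    (hχ : Metric.closedBall p₀ χ.rOut ⊆ Ω)
    (F : ℝ → (Fin q → ℝ) → (Fin q → ℝ) → ℝ)
    (hF : ContDiffOn ℝ ∞ (fun p : J q => F p.1 p.2.1 p.2.2) Ω) : Sm q :=
  ⟨fun p => χ p * F p.1 p.2.1 p.2.2, by
    change ContDiff ℝ ∞ _
    rw [contDiff_iff_contDiffAt]
    intro p
    by_cases hp : p ∈ Ω
    · exact χ.contDiff.contDiffAt.mul (hF.contDiffAt (hΩ.mem_nhds hp))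
    · have hp' : p ∈ (Metric.closedBall p₀ χ.rOut)ᶜ := fun h => hp (hχ h)
      refine (contDiffAt_const (c := (0:ℝ))).congr_of_eventuallyEq ?_
      filter_upwards [Metric.isClosed_closedBall.isOpen_compl.mem_nhds hp'] with y hy
      rw [χ.zero_of_le_dist, zero_mul]
      simp only [Set.mem_compl_iff, Metric.mem_closedBall, not_le] at hy
      exact hy.le⟩

theorem cut_rel {p₀ : J q} (χ : ContDiffBump p₀) {Ω : Set (J q)} (hΩ : IsOpen Ω)
    (hχ : Metric.closedBall p₀ χ.rOut ⊆ Ω)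
    (F : ℝ → (Fin q → ℝ) → (Fin q → ℝ) → ℝ)
    (hF : ContDiffOn ℝ ∞ (fun p : J q => F p.1 p.2.1 p.2.2) Ω)
    {W : Set (J q)} (hW : W ⊆ Metric.closedBall p₀ χ.rIn) : Rel W F (cut χ hΩ hχ F hF) := by
  intro p hp
  change _ = χ p * _
  rw [χ.one_of_mem_closedBall (hW hp), one_mul]

theorem main_potentials (Ω : Set (J q)) (hΩ : IsOpen Ω)
    (A B : Fin q → Fin q → ℝ → (Fin q → ℝ) → (Fin q → ℝ) → ℝ)
    (cc : Fin q → ℝ → (Fin q → ℝ) → (Fin q → ℝ) → ℝ)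
    (hA : ∀ a b, ContDiffOn ℝ ∞ (fun p : J q => A a b p.1 p.2.1 p.2.2) Ω)
    (hB : ∀ a b, ContDiffOn ℝ ∞ (fun p : J q => B a b p.1 p.2.1 p.2.2) Ω)
    (hc : ∀ a, ContDiffOn ℝ ∞ (fun p : J q => cc a p.1 p.2.1 p.2.2) Ω)
    (hskew : ∀ a b t x v, A a b t x v = - A b a t x v)
    (h21 : cond21On Ω A B cc) (t₀ : ℝ) (x₀ v₀ : Fin q → ℝ) (h₀ : (t₀, x₀, v₀) ∈ Ω) :
    ∃ W : Set (J q), IsOpen W ∧ (t₀, x₀, v₀) ∈ W ∧ W ⊆ Ω ∧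
      ∃ (α : Fin q → Sm q) (H : Sm q),
        (∀ a b, Rel W (A a b) (V b (α a) - V a (α b))) ∧
        (∀ a b, Rel W (B a b) (D (V b (α a) - V a (α b)) + X a (α b) + X b (α a)
          + D (V b (α a)) - V a (V b H))) ∧
        (∀ a, Rel W (cc a) (D (D (α a)) + X a H - D (V a H))) := by
  obtain ⟨R, hR, hRΩ⟩ := Metric.nhds_basis_closedBall.mem_iff.1 (hΩ.mem_nhds h₀)
  let χ : ContDiffBump ((t₀, x₀, v₀) : J q) := ⟨R / 2, R, by linarith, by linarith⟩
  obtain ⟨r, hr, hW⟩ := Wset_small t₀ x₀ v₀ (Metric.closedBall (t₀, x₀, v₀) χ.rIn)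
    (Metric.closedBall_mem_nhds _ χ.rIn_pos)
  have hWo := Wset_open t₀ x₀ v₀ r
  have hWΩ : Wset t₀ x₀ v₀ r ⊆ Ω := fun p hp => hRΩ (Metric.closedBall_subset_closedBall
    (χ.rIn_lt_rOut.le) (hW hp))
  have hW0 := Wset_Phi t₀ x₀ v₀ r 0 (Or.inl rfl)
  have hW1 := Wset_Phi t₀ x₀ v₀ r 1 (Or.inr rfl)
  have hmem := Wset_mem t₀ x₀ v₀ r hr
  generalize Wset t₀ x₀ v₀ r = W at *
  obtain ⟨A', hA', hsk'⟩ : ∃ A' : Fin q → Fin q → Sm q, (∀ a b, Rel W (A a b) (A' a b)) ∧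
      ∀ a b, A' a b = - A' b a := by
    refine ⟨fun a b => cut χ hΩ hRΩ (A a b) (hA a b),
      fun a b => cut_rel χ hΩ hRΩ (A a b) (hA a b) hW, fun a b => ?_⟩
    ext p
    change χ p * _ = - (χ p * _)
    rw [hskew a b]
    ring
  obtain ⟨B', hB'⟩ : ∃ B' : Fin q → Fin q → Sm q, ∀ a b, Rel W (B a b) (B' a b) :=
    ⟨fun a b => cut χ hΩ hRΩ (B a b) (hB a b), fun a b => cut_rel χ hΩ hRΩ _ (hB a b) hW⟩
  obtain ⟨c', hc'⟩ : ∃ c' : Fin q → Sm q, ∀ a, Rel W (cc a) (c' a) :=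
    ⟨fun a => cut χ hΩ hRΩ (cc a) (hc a), fun a => cut_rel χ hΩ hRΩ _ (hc a) hW⟩
  have sV : ∀ a b d p, (V d (A' a b)).1 p = - (V d (A' b a)).1 p := by
    intro a b d p; rw [hsk' a b, map_neg]; rfl
  have sDX : ∀ a b d p, (D (X d (A' a b))).1 p = - (D (X d (A' b a))).1 p := by
    intro a b d p; rw [hsk' a b, map_neg, map_neg]; rfl
  have rB : ∀ a b, Rel W (fun t x v => (B a b t x v + B b a t x v) / 2)
      ((1/2:ℝ) • (B' a b + B' b a)) := by
    intro a b p hp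
    change (B a b p.1 p.2.1 p.2.2 + B b a p.1 p.2.1 p.2.2) / 2
      = (1/2:ℝ) * ((B' a b).1 p + (B' b a).1 p)
    rw [hB' a b p hp, hB' b a p hp]; ring
  have rC : ∀ a b, Rel W (fun t x v => (pdv a (cc b) t x v - pdv b (cc a) t x v) / 2)
      ((1/2:ℝ) • (V a (c' b) - V b (c' a))) := by
    intro a b p hp
    change (pdv a (cc b) p.1 p.2.1 p.2.2 - pdv b (cc a) p.1 p.2.1 p.2.2) / 2
      = (1/2:ℝ) * ((V a (c' b)).1 p - (V b (c' a)).1 p)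
    rw [(hc' b).pdv hWo a p hp, (hc' a).pdv hWo b p hp]; ring
  have rA : ∀ a b c, Rel W (fun t x v =>
          (pdx a (A b c) t x v - pdx b (A a c) t x v - pdx c (A b a) t x v
            - pdx a (A c b) t x v + pdx b (A c a) t x v + pdx c (A a b) t x v) / 6)
      ((1/6:ℝ) • (X a (A' b c) - X b (A' a c) - X c (A' b a)
        - X a (A' c b) + X b (A' c a) + X c (A' a b))) := by
    intro a b c p hp
    change (pdx a (A b c) p.1 p.2.1 p.2.2 - pdx b (A a c) p.1 p.2.1 p.2.2
      - pdx c (A b a) p.1 p.2.1 p.2.2 - pdx a (A c b) p.1 p.2.1 p.2.2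
      + pdx b (A c a) p.1 p.2.1 p.2.2 + pdx c (A a b) p.1 p.2.1 p.2.2) / 6
      = (1/6:ℝ) * ((X a (A' b c)).1 p - (X b (A' a c)).1 p - (X c (A' b a)).1 p
        - (X a (A' c b)).1 p + (X b (A' c a)).1 p + (X c (A' a b)).1 p)
    rw [(hA' b c).pdx hWo a p hp, (hA' a c).pdx hWo b p hp, (hA' b a).pdx hWo c p hp,
      (hA' c b).pdx hWo a p hp, (hA' c a).pdx hWo b p hp, (hA' a b).pdx hWo c p hp]; ring
  have ev_smul : ∀ (k : ℝ) (F : Sm q) (p : J q), (k • F).1 p = k * F.1 p := fun _ _ _ => rfl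
  refine ⟨W, hWo, hmem, hWΩ, ?_⟩
  obtain ⟨α, H, e1, e2, e3⟩ := potentials t₀ x₀ v₀ W hWo hW0 hW1 A' B' c' hsk'
    (by
      intro p hp a b c
      obtain ⟨k, -⟩ := h21 p (hWΩ hp) a b c
      rw [(hA' b c).pdv hWo a p hp, (hA' a c).pdv hWo b p hp, (hA' b a).pdv hWo c p hp,
        (hA' c b).pdv hWo a p hp, (hA' c a).pdv hWo b p hp, (hA' a b).pdv hWo c p hp] at k
      linarith [sV b c a p, sV a c b p, sV b a c p])
    (by
      intro p hp a b
      obtain ⟨-, k, -⟩ := h21 p (hWΩ hp) a b a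
      rw [hB' a b p hp, hB' b a p hp, (hA' a b).D1 hWo p hp] at k
      linarith)
    (by
      intro p hp a b c
      obtain ⟨-, -, k, -⟩ := h21 p (hWΩ hp) a b c
      rw [(hB' b c).pdv hWo a p hp, (hB' a c).pdv hWo b p hp, (hA' b c).pdx hWo a p hp,
        (hA' a c).pdx hWo b p hp, (hA' a b).pdx hWo c p hp,
        ((hA' a b).pdv hWo c).D1 hWo p hp] at k
      linarith)
    (by
      intro p hp a b
      obtain ⟨-, -, -, k, -⟩ := h21 p (hWΩ hp) a b a
      rw [(hc' b).pdv hWo a p hp, (hc' a).pdv hWo b p hp, (rB a b).D1 hWo p hp,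
        map_smul, map_add, ev_smul, ev_add] at k
      linarith)
    (by
      intro p hp a b c
      obtain ⟨-, -, -, -, k, -⟩ := h21 p (hWΩ hp) a b c
      rw [(rC a b).pdv hWo c p hp, (hB' b c).pdx hWo a p hp, (hB' a c).pdx hWo b p hp,
        (((hA' a b).pdv hWo c).D1 hWo).D1 hWo p hp, (rA a b c).D1 hWo p hp] at k
      simp only [map_smul, map_add, map_sub, ev_smul, ev_add, ev_sub] at k
      linarith [sDX b c a p, sDX a c b p, sDX b a c p])
    (by
      intro p hp a b
      obtain ⟨-, -, -, -, -, k⟩ := h21 p (hWΩ hp) a b a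
      rw [(hc' b).pdx hWo a p hp, (hc' a).pdx hWo b p hp, (rC a b).D1 hWo p hp,
        (((hA' a b).D1 hWo).D1 hWo).D1 hWo p hp] at k
      simp only [map_smul, map_sub, ev_smul, ev_sub] at k
      linarith)
  exact ⟨α, H, fun a b p hp => (hA' a b p hp).trans (e1 p hp a b),
    fun a b p hp => (hB' a b p hp).trans (e2 p hp a b),
    fun a p hp => (hc' a p hp).trans (e3 p hp a)⟩

end

end Helm

/-- Sufficiency of the Helmholtz-type conditions (21): a third-order
expression of the form (20) built from a smooth triple `(A,B,c)` on an open set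
`Ω ⊆ ℝ × ℝ^q × ℝ^q`, with `A` skew-symmetric and satisfying conditions (21), is
locally variational. -/
theorem helmholtz_conditions_sufficient {q : ℕ}
    (Ω : Set (ℝ × (Fin q → ℝ) × (Fin q → ℝ))) (hΩ : IsOpen Ω)
    (A B : Fin q → Fin q → ℝ → (Fin q → ℝ) → (Fin q → ℝ) → ℝ)
    (cc : Fin q → ℝ → (Fin q → ℝ) → (Fin q → ℝ) → ℝ)
    (hA : ∀ a b, ContDiffOn ℝ (⊤ : ℕ∞)
      (fun p : ℝ × (Fin q → ℝ) × (Fin q → ℝ) => A a b p.1 p.2.1 p.2.2) Ω)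
    (hB : ∀ a b, ContDiffOn ℝ (⊤ : ℕ∞)
      (fun p : ℝ × (Fin q → ℝ) × (Fin q → ℝ) => B a b p.1 p.2.1 p.2.2) Ω)
    (hc : ∀ a, ContDiffOn ℝ (⊤ : ℕ∞)
      (fun p : ℝ × (Fin q → ℝ) × (Fin q → ℝ) => cc a p.1 p.2.1 p.2.2) Ω)
    (hskew : ∀ a b t x v, A a b t x v = - A b a t x v)
    (h21 : cond21On Ω A B cc) :
    ∀ t₀ : ℝ, ∀ x₀ v₀ v'₀ : Fin q → ℝ, (t₀, x₀, v₀) ∈ Ω →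
    ∃ U : Set (ℝ × (Fin q → ℝ) × (Fin q → ℝ) × (Fin q → ℝ)),
      IsOpen U ∧ (t₀, x₀, v₀, v'₀) ∈ U ∧ (∀ p ∈ U, (p.1, p.2.1, p.2.2.1) ∈ Ω) ∧
      ∃ L : ℝ → (Fin q → ℝ) → (Fin q → ℝ) → (Fin q → ℝ) → ℝ,
        ContDiffOn ℝ (⊤ : ℕ∞)
          (fun p : ℝ × (Fin q → ℝ) × (Fin q → ℝ) × (Fin q → ℝ) =>
            L p.1 p.2.1 p.2.2.1 p.2.2.2) U ∧
        ∀ I : Set ℝ, IsOpen I → ∀ c : ℝ → (Fin q → ℝ), ContDiffOn ℝ (⊤ : ℕ∞) c I →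
          (∀ t ∈ I, (t, c t, deriv c t, deriv (deriv c) t) ∈ U) →
          ∀ t ∈ I, ∀ a : Fin q,
            eulerPoisson L c t a
              = expr20 A B cc a t (c t) (deriv c t) (deriv (deriv c) t)
                  (deriv (deriv (deriv c)) t) := by
  intro t₀ x₀ v₀ v'₀ h₀
  obtain ⟨W, hWo, hmem, hWΩ, α, H, e1, e2, e3⟩ :=
    Helm.main_potentials Ω hΩ A B cc hA hB hc hskew h21 t₀ x₀ v₀ h₀
  refine ⟨{p | (p.1, p.2.1, p.2.2.1) ∈ W}, ?_, hmem, fun p hp => hWΩ hp,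
    Helm.Lag α H, (Helm.Lag_smooth α H).contDiffOn, ?_⟩
  · exact hWo.preimage (by fun_prop)
  · intro I hI c hcI hcU t ht a
    have hp : (t, c t, deriv c t) ∈ W := hcU t ht
    rw [Helm.euler_Lag α H I hI c hcI t ht a]
    unfold expr20
    have k1 : ∀ b, A a b t (c t) (deriv c t) = _ := fun b => e1 a b _ hp
    have k2 : ∀ b, B a b t (c t) (deriv c t) = _ := fun b => e2 a b _ hp
    have k3 : cc a t (c t) (deriv c t) = _ := e3 a _ hp
    have k4 : ∀ d b, pdv d (A a b) t (c t) (deriv c t) = _ :=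
      fun d b => (e1 a b).pdv hWo d _ hp
    simp only [k1, k2, k3, k4]
end

section
/- Necessity of the form (20) and of the Helmholtz-type conditions (21): let L = L(t,x,v,v′) be a smooth function on ℝ × ℝ^q × ℝ^q × ℝ^q whose Euler–Poisson expressions are of third order, i.e. there exists a smooth map Ẽ : ℝ × (ℝ^q)⁴ → ℝ^q such that E_a[L,c](t) = Ẽ_a(t, c(t), ċ(t), c̈(t), c⃛(t)) for every smooth curve c : ℝ → ℝ^q and every t. Then there exists a triple (A, B, c̃) of smooth functions of (t,x,v) only, with A skew-symmetric, such that Ẽ has the form (20), i.e. Ẽ_a(t,x,v,v′,v″) = A_{ab} v″^b + v′^c (∂A_{ab}/∂v^c) v′^b + B_{ab} v′^b + c̃_a, and (A, B, c̃) satisfies conditions (21). -/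
namespace HelmAux

/-- Configuration space. -/
abbrev Vec (q : ℕ) := Fin q → ℝ

/-- Functions of `(t,x,v)`. -/
abbrev Fn (q : ℕ) := ℝ → (Fin q → ℝ) → (Fin q → ℝ) → ℝ

/-- Uncurried form. -/
def unc {q : ℕ} (F : Fn q) : ℝ × Vec q × Vec q → ℝ := fun p => F p.1 p.2.1 p.2.2

/-- The smooth functions of `(t,x,v)`. -/
def Sm (q : ℕ) : Submodule ℝ (Fn q) where
  carrier := {F | ContDiff ℝ (⊤ : ℕ∞) (unc F)}
  add_mem' {F G} hF hG := by
    have h1 : ContDiff ℝ (⊤ : ℕ∞) (unc F) := hF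
    have h2 : ContDiff ℝ (⊤ : ℕ∞) (unc G) := hG
    exact h1.add h2
  zero_mem' := by
    change ContDiff ℝ (⊤ : ℕ∞) (fun _ : ℝ × Vec q × Vec q => (0 : ℝ))
    exact contDiff_const
  smul_mem' r F hF := by
    have h1 : ContDiff ℝ (⊤ : ℕ∞) (unc F) := hF
    exact h1.const_smul r

lemma cd_dir {E : Type*} [NormedAddCommGroup E] [NormedSpace ℝ E] {f : E → ℝ}
    (hf : ContDiff ℝ (⊤ : ℕ∞) f) (u : E) :
    ContDiff ℝ (⊤ : ℕ∞) (fun p => fderiv ℝ f p u) :=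
  (hf.fderiv_right (m := (⊤ : ℕ∞)) (by simp)).clm_apply contDiff_const

lemma dir_comm {E : Type*} [NormedAddCommGroup E] [NormedSpace ℝ E] {f : E → ℝ}
    (hf : ContDiff ℝ (⊤ : ℕ∞) f) (u w p : E) :
    fderiv ℝ (fun p => fderiv ℝ f p u) p w = fderiv ℝ (fun p => fderiv ℝ f p w) p u := by
  have hd : DifferentiableAt ℝ (fderiv ℝ f) p :=
    ((hf.fderiv_right (m := (⊤ : ℕ∞)) (by simp)).differentiable (by simp)) p
  have hs : IsSymmSndFDerivAt ℝ f p := hf.contDiffAt.isSymmSndFDerivAt (by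
    simp only [minSmoothness_of_isRCLikeNormedField]
    exact (WithTop.coe_le_coe.2 (le_top : (2 : ℕ∞) ≤ ⊤)))
  rw [fderiv_clm_apply hd (differentiableAt_const _),
    fderiv_clm_apply hd (differentiableAt_const _)]
  simpa using hs.eq w u

lemma line {E : Type*} [NormedAddCommGroup E] [NormedSpace ℝ E] {f : E → ℝ}
    (hf : ContDiff ℝ (⊤ : ℕ∞) f) {γ : ℝ → E} {s : ℝ} {p u : E} (hγ : HasDerivAt γ u s)
    (hp : γ s = p) : HasDerivAt (fun r => f (γ r)) (fderiv ℝ f p u) s := by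
  subst hp
  exact ((hf.differentiable (by simp)) (γ s)).hasFDerivAt.comp_hasDerivAt s hγ

variable {q : ℕ}

lemma hasDerivAt_line (y : Vec q) (e : Vec q) :
    HasDerivAt (fun s : ℝ => y + s • e) e 0 := by
  simpa using ((hasDerivAt_id (0 : ℝ)).smul_const e).const_add y

lemma pdt_has {F : Fn q} (hF : F ∈ Sm q) (t : ℝ) (x v : Vec q) :
    HasDerivAt (fun s => F s x v) (fderiv ℝ (unc F) (t, x, v) (1, 0, 0)) t :=
  line (f := unc F) hF (γ := fun s => (s, x, v))
    ((hasDerivAt_id t).prodMk (hasDerivAt_const t (x, v))) rfl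

lemma pdx_has {F : Fn q} (hF : F ∈ Sm q) (a : Fin q) (t : ℝ) (x v : Vec q) :
    HasDerivAt (fun s : ℝ => F t (x + s • (Pi.single a 1 : Fin q → ℝ)) v)
      (fderiv ℝ (unc F) (t, x, v) (0, Pi.single a 1, 0)) 0 :=
  line (f := unc F) hF (γ := fun s : ℝ => (t, x + s • (Pi.single a 1 : Fin q → ℝ), v))
    ((hasDerivAt_const 0 t).prodMk ((hasDerivAt_line x _).prodMk (hasDerivAt_const 0 v)))
    (by simp)

lemma pdv_has {F : Fn q} (hF : F ∈ Sm q) (a : Fin q) (t : ℝ) (x v : Vec q) :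
    HasDerivAt (fun s : ℝ => F t x (v + s • (Pi.single a 1 : Fin q → ℝ)))
      (fderiv ℝ (unc F) (t, x, v) (0, 0, Pi.single a 1)) 0 :=
  line (f := unc F) hF (γ := fun s : ℝ => (t, x, v + s • (Pi.single a 1 : Fin q → ℝ)))
    ((hasDerivAt_const 0 t).prodMk ((hasDerivAt_const 0 x).prodMk (hasDerivAt_line v _)))
    (by simp)

lemma unc_pdt {F : Fn q} (hF : F ∈ Sm q) :
    unc (pdt F) = fun p => fderiv ℝ (unc F) p (1, 0, 0) := by
  funext p; exact (pdt_has hF p.1 p.2.1 p.2.2).deriv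

lemma unc_pdx {F : Fn q} (hF : F ∈ Sm q) (a : Fin q) :
    unc (pdx a F) = fun p => fderiv ℝ (unc F) p (0, Pi.single a 1, 0) := by
  funext p; exact (pdx_has hF a p.1 p.2.1 p.2.2).deriv

lemma unc_pdv {F : Fn q} (hF : F ∈ Sm q) (a : Fin q) :
    unc (pdv a F) = fun p => fderiv ℝ (unc F) p (0, 0, Pi.single a 1) := by
  funext p; exact (pdv_has hF a p.1 p.2.1 p.2.2).deriv

lemma unc_inj {F G : Fn q} (h : unc F = unc G) : F = G := by
  funext t x v; exact congrFun h (t, x, v)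

lemma pdt_mem {F : Fn q} (hF : F ∈ Sm q) : pdt F ∈ Sm q := by
  change ContDiff ℝ (⊤ : ℕ∞) (unc _); rw [unc_pdt hF]; exact cd_dir hF _

lemma pdx_mem {F : Fn q} (hF : F ∈ Sm q) (a : Fin q) : pdx a F ∈ Sm q := by
  change ContDiff ℝ (⊤ : ℕ∞) (unc _); rw [unc_pdx hF]; exact cd_dir hF _

lemma pdv_mem {F : Fn q} (hF : F ∈ Sm q) (a : Fin q) : pdv a F ∈ Sm q := by
  change ContDiff ℝ (⊤ : ℕ∞) (unc _); rw [unc_pdv hF]; exact cd_dir hF _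

lemma D1_mem {F : Fn q} (hF : F ∈ Sm q) : D1 F ∈ Sm q := by
  have h1 : ContDiff ℝ (⊤ : ℕ∞) (unc (pdt F)) := pdt_mem hF
  have h2 : ∀ a, ContDiff ℝ (⊤ : ℕ∞) (unc (pdx a F)) := fun a => pdx_mem hF a
  change ContDiff ℝ (⊤ : ℕ∞) (fun p : ℝ × Vec q × Vec q =>
    unc (pdt F) p + ∑ a, p.2.2 a * unc (pdx a F) p)
  fun_prop

lemma xx_comm {F : Fn q} (hF : F ∈ Sm q) (a b : Fin q) :
    pdx a (pdx b F) = pdx b (pdx a F) := by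
  apply unc_inj
  rw [unc_pdx (pdx_mem hF b), unc_pdx (pdx_mem hF a), unc_pdx hF, unc_pdx hF]
  funext p; exact dir_comm hF _ _ _

lemma vv_comm {F : Fn q} (hF : F ∈ Sm q) (a b : Fin q) :
    pdv a (pdv b F) = pdv b (pdv a F) := by
  apply unc_inj
  rw [unc_pdv (pdv_mem hF b), unc_pdv (pdv_mem hF a), unc_pdv hF, unc_pdv hF]
  funext p; exact dir_comm hF _ _ _

lemma vx_comm {F : Fn q} (hF : F ∈ Sm q) (a b : Fin q) :
    pdv a (pdx b F) = pdx b (pdv a F) := by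
  apply unc_inj
  rw [unc_pdv (pdx_mem hF b), unc_pdx (pdv_mem hF a), unc_pdx hF, unc_pdv hF]
  funext p; exact dir_comm hF _ _ _

lemma xt_comm {F : Fn q} (hF : F ∈ Sm q) (a : Fin q) :
    pdx a (pdt F) = pdt (pdx a F) := by
  apply unc_inj
  rw [unc_pdx (pdt_mem hF), unc_pdt (pdx_mem hF a), unc_pdx hF, unc_pdt hF]
  funext p; exact dir_comm hF _ _ _

lemma vt_comm {F : Fn q} (hF : F ∈ Sm q) (a : Fin q) :
    pdv a (pdt F) = pdt (pdv a F) := by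
  apply unc_inj
  rw [unc_pdv (pdt_mem hF), unc_pdt (pdv_mem hF a), unc_pdv hF, unc_pdt hF]
  funext p; exact dir_comm hF _ _ _

lemma pdt_has' {F : Fn q} (hF : F ∈ Sm q) (t : ℝ) (x v : Vec q) :
    HasDerivAt (fun s => F s x v) (pdt F t x v) t :=
  (pdt_has hF t x v).differentiableAt.hasDerivAt

lemma pdx_has' {F : Fn q} (hF : F ∈ Sm q) (a : Fin q) (t : ℝ) (x v : Vec q) :
    HasDerivAt (fun s : ℝ => F t (x + s • (Pi.single a 1 : Fin q → ℝ)) v)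
      (pdx a F t x v) 0 :=
  (pdx_has hF a t x v).differentiableAt.hasDerivAt

lemma pdv_has' {F : Fn q} (hF : F ∈ Sm q) (a : Fin q) (t : ℝ) (x v : Vec q) :
    HasDerivAt (fun s : ℝ => F t x (v + s • (Pi.single a 1 : Fin q → ℝ)))
      (pdv a F t x v) 0 :=
  (pdv_has hF a t x v).differentiableAt.hasDerivAt

lemma xD_comm {F : Fn q} (hF : F ∈ Sm q) (b : Fin q) :
    pdx b (D1 F) = D1 (pdx b F) := by
  funext t x v
  have h := (pdx_has' (pdt_mem hF) b t x v).add
    (HasDerivAt.fun_sum (u := Finset.univ) fun a _ =>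
      (pdx_has' (pdx_mem hF a) b t x v).const_mul (v a))
  refine h.deriv.trans ?_
  simp only [D1, xt_comm hF, xx_comm hF b]

lemma vD_comm {F : Fn q} (hF : F ∈ Sm q) (b : Fin q) :
    pdv b (D1 F) = D1 (pdv b F) + pdx b F := by
  funext t x v
  have h := (pdv_has' (pdt_mem hF) b t x v).add
    (HasDerivAt.fun_sum (u := Finset.univ) fun a _ =>
      (hasDerivAt_pi.1 (hasDerivAt_line v (Pi.single b 1)) a).mul
      (pdv_has' (pdx_mem hF a) b t x v))
  refine h.deriv.trans ?_
  simp [D1, vt_comm hF, vx_comm hF b, Finset.sum_add_distrib, Pi.single_apply]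
  ring

/-- `∂_x` as a linear map. -/
noncomputable def X (a : Fin q) : Sm q →ₗ[ℝ] Sm q where
  toFun F := ⟨pdx a F, pdx_mem F.2 a⟩
  map_add' F G := by
    ext t x v
    exact ((pdx_has' F.2 a t x v).add (pdx_has' G.2 a t x v)).deriv
  map_smul' r F := by
    ext t x v
    exact ((pdx_has' F.2 a t x v).const_mul r).deriv

/-- `∂_v` as a linear map. -/
noncomputable def V (a : Fin q) : Sm q →ₗ[ℝ] Sm q where
  toFun F := ⟨pdv a F, pdv_mem F.2 a⟩
  map_add' F G := by
    ext t x v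
    exact ((pdv_has' F.2 a t x v).add (pdv_has' G.2 a t x v)).deriv
  map_smul' r F := by
    ext t x v
    exact ((pdv_has' F.2 a t x v).const_mul r).deriv

/-- `D₁` as a linear map. -/
noncomputable def D : Sm q →ₗ[ℝ] Sm q where
  toFun F := ⟨D1 F, D1_mem F.2⟩
  map_add' F G := by
    ext t x v
    have h1 : pdt (F + G : Fn q) t x v = pdt F t x v + pdt G t x v :=
      ((pdt_has' F.2 t x v).add (pdt_has' G.2 t x v)).deriv
    have h2 : ∀ a, pdx a (F + G : Fn q) t x v = pdx a F t x v + pdx a G t x v := fun a =>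
      ((pdx_has' F.2 a t x v).add (pdx_has' G.2 a t x v)).deriv
    simp [D1, h1, h2, mul_add, Finset.sum_add_distrib]
    ring
  map_smul' r F := by
    ext t x v
    have h1 : pdt (r • F : Fn q) t x v = r * pdt F t x v :=
      ((pdt_has' F.2 t x v).const_mul r).deriv
    have h2 : ∀ a, pdx a (r • F : Fn q) t x v = r * pdx a F t x v := fun a =>
      ((pdx_has' F.2 a t x v).const_mul r).deriv
    simp [D1, h1, h2, mul_add, Finset.mul_sum, mul_left_comm]

lemma XX (a b : Fin q) (f : Sm q) : X a (X b f) = X b (X a f) := Subtype.ext (xx_comm f.2 a b)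
lemma VV (a b : Fin q) (f : Sm q) : V a (V b f) = V b (V a f) := Subtype.ext (vv_comm f.2 a b)
lemma VX (a b : Fin q) (f : Sm q) : V a (X b f) = X b (V a f) := Subtype.ext (vx_comm f.2 a b)
lemma XD (a : Fin q) (f : Sm q) : X a (D f) = D (X a f) := Subtype.ext (xD_comm f.2 a)
lemma VD (a : Fin q) (f : Sm q) : V a (D f) = D (V a f) + X a f := Subtype.ext (vD_comm f.2 a)

/-- The matrix `A`. -/
noncomputable def AA (P : Fin q → Sm q) (a b : Fin q) : Sm q := V b (P a) - V a (P b)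

/-- The matrix `B`. -/
noncomputable def BB (P : Fin q → Sm q) (Q : Sm q) (a b : Fin q) : Sm q :=
  X a (P b) + X b (P a) + (2 : ℝ) • D (V b (P a)) - D (V a (P b)) - V a (V b Q)

/-- The vector `c`. -/
noncomputable def CC (P : Fin q → Sm q) (Q : Sm q) (a : Fin q) : Sm q :=
  X a Q + D (D (P a)) - D (V a Q)

lemma cond (P : Fin q → Sm q) (Q : Sm q) :
    cond21On Set.univ (fun a b => (AA P a b : Fn q)) (fun a b => (BB P Q a b : Fn q))
      (fun a => (CC P Q a : Fn q)) := by
  rintro ⟨t, x, v⟩ - a b c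
  have key : ∀ f : Sm q, f = 0 → (f : Fn q) t x v = 0 := by rintro f rfl; rfl
  refine ⟨?_, ?_, ?_, ?_, ?_, ?_⟩
  · have h := key (V a (AA P b c) - V b (AA P a c) - V c (AA P b a) - V a (AA P c b)
      + V b (AA P c a) + V c (AA P a b)) (by
        simp only [AA, map_sub, VV]
        module)
    exact (div_eq_zero_iff.2 (Or.inl h))
  · have h := key (BB P Q a b - BB P Q b a - (3 : ℝ) • D (AA P a b)) (by
        simp only [AA, BB, map_sub, VV b a]
        module)
    rw [mul_div_cancel₀ _ two_ne_zero]
    exact h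
  · have h := key (V a (BB P Q b c) - V b (BB P Q a c)
      - (2 : ℝ) • (X a (AA P b c) - X b (AA P a c)) + X c (AA P a b)
      + (2 : ℝ) • D (V c (AA P a b))) (by
        simp only [AA, BB, map_sub, map_add, map_smul, VX, XD, VD, VV, XX]
        module)
    refine Eq.trans ?_ h
    change _ = pdv a (BB P Q b c) t x v - pdv b (BB P Q a c) t x v
      - 2 * (pdx a (AA P b c) t x v - pdx b (AA P a c) t x v)
      + pdx c (AA P a b) t x v + 2 * D1 (pdv c (AA P a b)) t x v
    ring
  · have e : (fun t x v => ((BB P Q a b : Fn q) t x v + (BB P Q b a : Fn q) t x v) / 2)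
        = (((1/2 : ℝ) • (BB P Q a b + BB P Q b a) : Sm q) : Fn q) := by
      funext t x v
      change _ = (1/2 : ℝ) * ((BB P Q a b : Fn q) t x v + (BB P Q b a : Fn q) t x v)
      ring
    have h := key ((1/2 : ℝ) • (V a (CC P Q b) + V b (CC P Q a))
      - D ((1/2 : ℝ) • (BB P Q a b + BB P Q b a))) (by
        simp only [CC, BB, map_sub, map_add, map_smul, VX, XD, VD, VV b a, XX]
        module)
    simp only [e]
    refine Eq.trans ?_ h
    change _ = (1/2 : ℝ) * (pdv a (CC P Q b) t x v + pdv b (CC P Q a) t x v)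
      - D1 ((1/2 : ℝ) • (BB P Q a b + BB P Q b a) : Sm q) t x v
    ring
  · have e : (fun t x v => (pdv a (CC P Q b) t x v - pdv b (CC P Q a) t x v) / 2)
        = (((1/2 : ℝ) • (V a (CC P Q b) - V b (CC P Q a)) : Sm q) : Fn q) := by
      funext t x v
      change _ = (1/2 : ℝ) * (pdv a (CC P Q b) t x v - pdv b (CC P Q a) t x v)
      ring
    have e2 : (fun t x v => (pdx a (AA P b c) t x v - pdx b (AA P a c) t x v
          - pdx c (AA P b a) t x v - pdx a (AA P c b) t x v + pdx b (AA P c a) t x v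
          + pdx c (AA P a b) t x v) / 6)
        = (((1/6 : ℝ) • (X a (AA P b c) - X b (AA P a c) - X c (AA P b a) - X a (AA P c b)
            + X b (AA P c a) + X c (AA P a b)) : Sm q) : Fn q) := by
      funext t x v
      change _ = (1/6 : ℝ) * (pdx a (AA P b c) t x v - pdx b (AA P a c) t x v
          - pdx c (AA P b a) t x v - pdx a (AA P c b) t x v + pdx b (AA P c a) t x v
          + pdx c (AA P a b) t x v)
      ring
    have h := key ((2 : ℝ) • V c ((1/2 : ℝ) • (V a (CC P Q b) - V b (CC P Q a)))
      - (2 : ℝ) • (X a (BB P Q b c) - X b (BB P Q a c)) + D (D (V c (AA P a b)))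
      + (6 : ℝ) • D ((1/6 : ℝ) • (X a (AA P b c) - X b (AA P a c) - X c (AA P b a)
          - X a (AA P c b) + X b (AA P c a) + X c (AA P a b)))) (by
        simp only [CC, BB, AA, map_sub, map_add, map_smul, VX, XD, VD, VV, XX]
        module)
    simp only [e, e2]
    refine Eq.trans ?_ h
    change _ = 2 * pdv c ((1/2 : ℝ) • (V a (CC P Q b) - V b (CC P Q a)) : Sm q) t x v
      - 2 * (pdx a (BB P Q b c) t x v - pdx b (BB P Q a c) t x v)
      + D1 (D1 (pdv c (AA P a b))) t x v
      + 6 * D1 ((1/6 : ℝ) • (X a (AA P b c) - X b (AA P a c) - X c (AA P b a)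
          - X a (AA P c b) + X b (AA P c a) + X c (AA P a b)) : Sm q) t x v
    ring
  · have e : (fun t x v => (pdv a (CC P Q b) t x v - pdv b (CC P Q a) t x v) / 2)
        = (((1/2 : ℝ) • (V a (CC P Q b) - V b (CC P Q a)) : Sm q) : Fn q) := by
      funext t x v
      change _ = (1/2 : ℝ) * (pdv a (CC P Q b) t x v - pdv b (CC P Q a) t x v)
      ring
    have h := key ((2 : ℝ) • (X a (CC P Q b) - X b (CC P Q a))
      - (2 : ℝ) • D ((1/2 : ℝ) • (V a (CC P Q b) - V b (CC P Q a)))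
      - D (D (D (AA P a b)))) (by
        simp only [CC, AA, map_sub, map_add, map_smul, VX, XD, VD, VV, XX]
        module)
    simp only [e]
    refine Eq.trans ?_ h
    change _ = 2 * (pdx a (CC P Q b) t x v - pdx b (CC P Q a) t x v)
      - 2 * D1 ((1/2 : ℝ) • (V a (CC P Q b) - V b (CC P Q a)) : Sm q) t x v
      - D1 (D1 (D1 (AA P a b))) t x v
    ring

/-- Polynomial curve with prescribed jet at `t`. -/
noncomputable def cpoly (t : ℝ) (x v w z u : Vec q) : ℝ → Vec q := fun τ =>
  x + (τ - t) • v + ((τ - t) ^ 2 / 2) • w + ((τ - t) ^ 3 / 6) • z + ((τ - t) ^ 4 / 24) • u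

lemma cpoly_at (t : ℝ) (x v w z u : Vec q) : cpoly t x v w z u t = x := by
  simp [cpoly]

lemma cpoly_has (t : ℝ) (x v w z u : Vec q) (τ : ℝ) :
    HasDerivAt (cpoly t x v w z u) (cpoly t v w z u 0 τ) τ := by
  have h1 : HasDerivAt (fun τ : ℝ => τ - t) 1 τ := (hasDerivAt_id τ).sub_const t
  have h := ((((hasDerivAt_const τ x).add (h1.smul_const v)).add
    (((h1.pow 2).div_const 2).smul_const w)).add (((h1.pow 3).div_const 6).smul_const z)).add
    (((h1.pow 4).div_const 24).smul_const u)
  refine h.congr_deriv ?_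
  ext i
  simp [cpoly]
  ring

lemma cpoly_deriv (t : ℝ) (x v w z u : Vec q) :
    deriv (cpoly t x v w z u) = cpoly t v w z u 0 :=
  funext fun τ => (cpoly_has t x v w z u τ).deriv

lemma cpoly_smooth (t : ℝ) (x v w z u : Vec q) :
    ContDiff ℝ (⊤ : ℕ∞) (cpoly t x v w z u) := by
  unfold cpoly
  fun_prop

/-- Functions of `(t,x,v,w)`. -/
abbrev Fn2 (q : ℕ) := ℝ → (Fin q → ℝ) → (Fin q → ℝ) → (Fin q → ℝ) → ℝ

/-- Uncurried form. -/
def unc2 (L : Fn2 q) : ℝ × Vec q × Vec q × Vec q → ℝ := fun p => L p.1 p.2.1 p.2.2.1 p.2.2.2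

lemma unc2_pLv {L : Fn2 q} (hL : ContDiff ℝ (⊤ : ℕ∞) (unc2 L)) (a : Fin q) :
    unc2 (pLv a L) = fun p => fderiv ℝ (unc2 L) p (0, 0, Pi.single a 1, 0) := by
  funext ⟨t, x, v, w⟩
  exact (line hL (γ := fun s : ℝ => (t, x, v + s • (Pi.single a 1 : Fin q → ℝ), w))
    ((hasDerivAt_const 0 t).prodMk ((hasDerivAt_const 0 x).prodMk
      ((hasDerivAt_line v _).prodMk (hasDerivAt_const 0 w)))) (by simp)).deriv

lemma unc2_pLw {L : Fn2 q} (hL : ContDiff ℝ (⊤ : ℕ∞) (unc2 L)) (a : Fin q) :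
    unc2 (pLw a L) = fun p => fderiv ℝ (unc2 L) p (0, 0, 0, Pi.single a 1) := by
  funext ⟨t, x, v, w⟩
  exact (line hL (γ := fun s : ℝ => (t, x, v, w + s • (Pi.single a 1 : Fin q → ℝ)))
    ((hasDerivAt_const 0 t).prodMk ((hasDerivAt_const 0 x).prodMk
      ((hasDerivAt_const 0 v).prodMk (hasDerivAt_line w _)))) (by simp)).deriv

lemma second {E : Type*} [NormedAddCommGroup E] [NormedSpace ℝ E] {f : E → ℝ}
    (hf : ContDiff ℝ (⊤ : ℕ∞) f) {γ γ1 : ℝ → E} {t : ℝ} {g2 : E}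
    (hγ : ∀ s, HasDerivAt γ (γ1 s) s) (h2 : HasDerivAt γ1 g2 t) :
    deriv (deriv (fun s => f (γ s))) t
      = fderiv ℝ (fderiv ℝ f) (γ t) (γ1 t) (γ1 t) + fderiv ℝ f (γ t) g2 := by
  have e : deriv (fun s => f (γ s)) = fun s => fderiv ℝ f (γ s) (γ1 s) :=
    funext fun s => (line hf (hγ s) rfl).deriv
  rw [e]
  have hd : DifferentiableAt ℝ (fderiv ℝ f) (γ t) :=
    ((hf.fderiv_right (m := (⊤ : ℕ∞)) (by simp)).differentiable (by simp)) _
  have h3 := hd.hasFDerivAt.comp_hasDerivAt t (hγ t)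
  exact (h3.clm_apply h2).deriv

/-- The prolonged polynomial curve. -/
noncomputable def gam (t : ℝ) (x v w z u : Vec q) (r : ℝ) (s : ℝ) :
    ℝ × Vec q × Vec q × Vec q :=
  (r, cpoly t x v w z u s, cpoly t v w z u 0 s, cpoly t w z u 0 0 s)

lemma gam_has (t : ℝ) (x v w z u : Vec q) (s : ℝ) :
    HasDerivAt (fun s => gam t x v w z u s s) (gam t v w z u 0 1 s) s :=
  (hasDerivAt_id s).prodMk ((cpoly_has _ _ _ _ _ _ s).prodMk ((cpoly_has _ _ _ _ _ _ s).prodMk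
    (cpoly_has _ _ _ _ _ _ s)))

lemma gam_has1 (t : ℝ) (x v w z u : Vec q) (r s : ℝ) :
    HasDerivAt (fun s => gam t x v w z u r s) (gam t v w z u 0 0 s) s :=
  (hasDerivAt_const s r).prodMk ((cpoly_has _ _ _ _ _ _ s).prodMk
    ((cpoly_has _ _ _ _ _ _ s).prodMk (cpoly_has _ _ _ _ _ _ s)))

lemma gam_at (t : ℝ) (x v w z u : Vec q) (r : ℝ) : gam t x v w z u r t = (r, x, v, w) := by
  simp [gam, cpoly_at]

lemma ep_eq {L : Fn2 q} (hL : ContDiff ℝ (⊤ : ℕ∞) (unc2 L)) (a : Fin q)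
    (t : ℝ) (x v w z u : Vec q) :
    eulerPoisson L (cpoly t x v w z u) t a = pLx a L t x v w
      - fderiv ℝ (unc2 (pLv a L)) (t, x, v, w) (1, v, w, z)
      + (fderiv ℝ (fderiv ℝ (unc2 (pLw a L))) (t, x, v, w) (1, v, w, z) (1, v, w, z)
        + fderiv ℝ (unc2 (pLw a L)) (t, x, v, w) (0, w, z, u)) := by
  have hv : ContDiff ℝ (⊤ : ℕ∞) (unc2 (pLv a L)) := by
    rw [unc2_pLv hL]; exact cd_dir hL _
  have hw : ContDiff ℝ (⊤ : ℕ∞) (unc2 (pLw a L)) := by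
    rw [unc2_pLw hL]; exact cd_dir hL _
  have h1 := (line hv (gam_has t x v w z u t) rfl).deriv
  have h2 := second hw (gam_has t x v w z u) (gam_has1 t v w z u 0 1 t)
  simp only [gam_at] at h1 h2
  rw [← h2, ← h1]
  simp only [eulerPoisson, cpoly_deriv, cpoly_at]
  rfl

lemma w_sum (l : ℝ × Vec q × Vec q × Vec q →L[ℝ] ℝ) (w : Vec q) :
    l (0, 0, 0, w) = ∑ b, l (0, 0, 0, Pi.single b 1) * w b := by
  let m : Vec q →ₗ[ℝ] ℝ := l.toLinearMap ∘ₗ (LinearMap.inr ℝ ℝ _ ∘ₗ LinearMap.inr ℝ (Vec q) _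
    ∘ₗ LinearMap.inr ℝ (Vec q) (Vec q))
  have h : m w = ∑ b, w b • m (Pi.single b 1) := by
    conv_lhs => rw [pi_eq_sum_univ' w]
    simp only [map_sum, map_smul]
  calc l (0, 0, 0, w) = m w := rfl
    _ = _ := by rw [h]; exact Finset.sum_congr rfl fun b _ => mul_comm _ _

lemma vec_sum (l : Vec q →ₗ[ℝ] ℝ) (w : Vec q) :
    l w = ∑ b, l (Pi.single b 1) * w b := by
  conv_lhs => rw [pi_eq_sum_univ' w]
  simp only [map_sum, map_smul, smul_eq_mul]
  refine Finset.sum_congr rfl fun b _ => ?_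
  rw [mul_comm]

lemma has_line2 {G : Fn2 q} (hG : ContDiff ℝ (⊤ : ℕ∞) (unc2 G)) (t : ℝ) (x v w : Vec q) (s : ℝ) :
    HasDerivAt (fun s : ℝ => G t x v (s • w))
      (fderiv ℝ (unc2 G) (t, x, v, s • w) (0, 0, 0, w)) s :=
  line hG (γ := fun s : ℝ => (t, x, v, s • w))
    ((hasDerivAt_const s t).prodMk ((hasDerivAt_const s x).prodMk
      ((hasDerivAt_const s v).prodMk (by simpa using (hasDerivAt_id s).smul_const w)))) rfl

lemma pLw_indep {L : Fn2 q} (hL : ContDiff ℝ (⊤ : ℕ∞) (unc2 L)) (a : Fin q)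
    (h : ∀ t x v w z u, eulerPoisson L (cpoly t x v w z u) t a
      = eulerPoisson L (cpoly t x v w z 0) t a) (t : ℝ) (x v w : Vec q) :
    pLw a L t x v w = pLw a L t x v 0 := by
  have hw : ContDiff ℝ (⊤ : ℕ∞) (unc2 (pLw a L)) := by
    rw [unc2_pLw hL]; exact cd_dir hL _
  have h0 : ∀ t x v w u, fderiv ℝ (unc2 (pLw a L)) (t, x, v, w) (0, 0, 0, u) = 0 := by
    intro t x v w u
    have h1 := h t x v w 0 u
    rw [ep_eq hL, ep_eq hL] at h1
    have h2 : fderiv ℝ (unc2 (pLw a L)) (t, x, v, w) (0, w, 0, u)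
      = fderiv ℝ (unc2 (pLw a L)) (t, x, v, w) (0, w, 0, 0) := by linarith
    rw [← sub_eq_zero, ← map_sub] at h2
    simpa using h2
  have h3 := is_const_of_deriv_eq_zero (f := fun s : ℝ => pLw a L t x v (s • w))
    (fun s => (has_line2 hw t x v w s).differentiableAt)
    (fun s => by rw [(has_line2 hw t x v w s).deriv, h0]) 1 0
  simpa using h3

lemma L_affine {L : Fn2 q} (hL : ContDiff ℝ (⊤ : ℕ∞) (unc2 L))
    (h : ∀ a t x v w, pLw a L t x v w = pLw a L t x v 0) (t : ℝ) (x v w : Vec q) :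
    L t x v w = ∑ b, pLw b L t x v 0 * w b + L t x v 0 := by
  have h1 : ∀ s : ℝ, HasDerivAt (fun s : ℝ => L t x v (s • w) - s * ∑ b, pLw b L t x v 0 * w b)
      0 s := by
    intro s
    refine ((has_line2 hL t x v w s).sub ((hasDerivAt_id s).mul_const _)).congr_deriv ?_
    rw [w_sum, one_mul, sub_eq_zero]
    refine Finset.sum_congr rfl fun b _ => ?_
    rw [← h b t x v (s • w)]
    congr 1
    exact (congrFun (unc2_pLw hL b) (t, x, v, s • w)).symm
  have h3 := is_const_of_deriv_eq_zero (fun s => (h1 s).differentiableAt)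
    (fun s => (h1 s).deriv) 1 0
  simp at h3
  linarith

lemma chain (f : Sm q) {c c1 : ℝ → Vec q} {τ : ℝ} {w : Vec q} (hc : HasDerivAt c (c1 τ) τ)
    (hc1 : HasDerivAt c1 w τ) :
    HasDerivAt (fun τ => (f : Fn q) τ (c τ) (c1 τ))
      ((D f : Fn q) τ (c τ) (c1 τ) + ∑ b, (V b f : Fn q) τ (c τ) (c1 τ) * w b) τ := by
  have h := line (f := unc (f : Fn q)) f.2 (γ := fun s => (s, c s, c1 s))
    ((hasDerivAt_id τ).prodMk (hc.prodMk hc1)) rfl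
  refine h.congr_deriv ?_
  set l := fderiv ℝ (unc (f : Fn q)) (τ, c τ, c1 τ) with hl
  have e1 : l (1, 0, 0) = pdt f τ (c τ) (c1 τ) := (pdt_has f.2 _ _ _).deriv.symm
  have e2 : ∀ b, l (0, Pi.single b 1, 0) = pdx b f τ (c τ) (c1 τ) :=
    fun b => (pdx_has f.2 _ _ _ _).deriv.symm
  have e3 : ∀ b, l (0, 0, Pi.single b 1) = pdv b f τ (c τ) (c1 τ) :=
    fun b => (pdv_has f.2 _ _ _ _).deriv.symm
  have s1 := vec_sum (l.toLinearMap ∘ₗ (LinearMap.inr ℝ ℝ _ ∘ₗ LinearMap.inl ℝ (Vec q) (Vec q)))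
    (c1 τ)
  have s2 := vec_sum (l.toLinearMap ∘ₗ (LinearMap.inr ℝ ℝ _ ∘ₗ LinearMap.inr ℝ (Vec q) (Vec q))) w
  simp only [LinearMap.comp_apply, LinearMap.inr_apply, LinearMap.inl_apply,
    ContinuousLinearMap.coe_coe, e2, e3] at s1 s2
  have s3 : l (1, c1 τ, w) = l (1, 0, 0) + l (0, c1 τ, 0) + l (0, 0, w) := by
    rw [← map_add, ← map_add]; simp
  rw [s3, s1, s2, e1]
  change _ = D1 f τ (c τ) (c1 τ) + ∑ b, pdv b f τ (c τ) (c1 τ) * w b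
  simp only [D1, mul_comm (c1 τ _)]

lemma final {L : Fn2 q} (P : Fin q → Sm q) (Q : Sm q)
    (hPQ : ∀ t x v w, L t x v w = ∑ b, (P b : Fn q) t x v * w b + (Q : Fn q) t x v)
    (hP : ∀ a t x v w, pLw a L t x v w = (P a : Fn q) t x v)
    (a : Fin q) (t : ℝ) (x v w z : Vec q) :
    eulerPoisson L (cpoly t x v w z 0) t a
      = expr20 (fun a b => (AA P a b : Fn q)) (fun a b => (BB P Q a b : Fn q))
      (fun a => (CC P Q a : Fn q)) a t x v w z := by
  have hx : ∀ t x v w, pLx a L t x v w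
      = ∑ b, (X a (P b) : Fn q) t x v * w b + (X a Q : Fn q) t x v := by
    intro t x v w
    simp only [pLx, hPQ]
    exact ((HasDerivAt.fun_sum (u := Finset.univ) fun b _ =>
      (pdx_has' (P b).2 a t x v).mul_const (w b)).add (pdx_has' Q.2 a t x v)).deriv
  have hv : ∀ t x v w, pLv a L t x v w
      = ∑ b, (V a (P b) : Fn q) t x v * w b + (V a Q : Fn q) t x v := by
    intro t x v w
    simp only [pLv, hPQ]
    exact ((HasDerivAt.fun_sum (u := Finset.univ) fun b _ =>
      (pdv_has' (P b).2 a t x v).mul_const (w b)).add (pdv_has' Q.2 a t x v)).deriv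
  have ch : ∀ (f : Sm q) (τ : ℝ), HasDerivAt
      (fun τ => (f : Fn q) τ (cpoly t x v w z 0 τ) (cpoly t v w z 0 0 τ))
      ((D f : Fn q) τ (cpoly t x v w z 0 τ) (cpoly t v w z 0 0 τ)
        + ∑ b, (V b f : Fn q) τ (cpoly t x v w z 0 τ) (cpoly t v w z 0 0 τ)
          * cpoly t w z 0 0 0 τ b) τ := fun f τ =>
    chain f (cpoly_has t x v w z 0 τ) (cpoly_has t v w z 0 0 τ)
  have hw : ∀ (b : Fin q) (τ : ℝ), HasDerivAt (fun τ => cpoly t w z 0 0 0 τ b)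
      (cpoly t z 0 0 0 0 τ b) τ := fun b τ =>
    hasDerivAt_pi.1 (cpoly_has t w z 0 0 0 τ) b
  simp only [eulerPoisson, cpoly_deriv, hx, hv, hP]
  have d1 := ((HasDerivAt.fun_sum (u := Finset.univ) fun b _ =>
    (ch (V a (P b)) t).mul (hw b t)).add (ch (V a Q) t)).deriv
  have d2 : deriv (fun τ => (P a : Fn q) τ (cpoly t x v w z 0 τ) (cpoly t v w z 0 0 τ)) = _ :=
    funext fun τ => (ch (P a) τ).deriv
  have d3 := ((ch (D (P a)) t).add (HasDerivAt.fun_sum (u := Finset.univ) fun b _ =>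
    (ch (V b (P a)) t).mul (hw b t))).deriv
  rw [d2]
  refine (congrArg₂ (· + ·) (congrArg₂ (· - ·) rfl d1) d3).trans ?_
  simp only [cpoly_at]
  have hA : ∀ a b, (AA P a b : Fn q) t x v = (V b (P a) : Fn q) t x v - (V a (P b) : Fn q) t x v :=
    fun a b => rfl
  have hVA : ∀ c a b, pdv c (AA P a b : Fn q) t x v
      = (V c (V b (P a)) : Fn q) t x v - (V c (V a (P b)) : Fn q) t x v := by
    intro c a b
    change (V c (AA P a b) : Fn q) t x v = _
    rw [AA, map_sub]; rfl
  have hB : ∀ a b, (BB P Q a b : Fn q) t x v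
      = (X a (P b) : Fn q) t x v + (X b (P a) : Fn q) t x v + 2 * (D (V b (P a)) : Fn q) t x v
        - (D (V a (P b)) : Fn q) t x v - (V a (V b Q) : Fn q) t x v := fun a b => rfl
  have hC : ∀ a, (CC P Q a : Fn q) t x v
      = (X a Q : Fn q) t x v + (D (D (P a)) : Fn q) t x v - (D (V a Q) : Fn q) t x v := fun a => rfl
  have hVD : ∀ b, (V b (D (P a)) : Fn q) t x v
      = (D (V b (P a)) : Fn q) t x v + (X b (P a) : Fn q) t x v := by
    intro b; rw [VD]; rfl
  simp only [expr20, hA, hVA, hB, hC, hVD, VV _ a Q]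
  rw [Finset.sum_comm (f := fun c b => w c * _ * w b)]
  have e : ∀ (g : Fin q → Fin q → ℝ) , ∑ b, (∑ c, g c b * w c) * w b
     = ∑ b, ∑ c, w c * g c b * w b := by
    intro g
    refine Finset.sum_congr rfl fun b _ => ?_
    rw [Finset.sum_mul]
    exact Finset.sum_congr rfl fun c _ => by ring
  simp only [add_mul, sub_mul, mul_sub, Finset.sum_add_distrib, Finset.sum_sub_distrib, e,
    mul_assoc, ← Finset.mul_sum]
  ring

end HelmAux

/-- Necessity of the form (20) and of the Helmholtz-type conditions
(21): if the Euler–Poisson expressions of a smooth second-order Lagrange function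
`L(t,x,v,v′)` on `ℝ × ℝ^q × ℝ^q × ℝ^q` are of third order, i.e. factor through a smooth
map `Ẽ` of `(t, c, ċ, c̈, c⃛)`, then `Ẽ` is of the form (20) for some smooth triple
`(A,B,c̃)` depending on `(t,x,v)` only, with `A` skew-symmetric, satisfying (21). -/
theorem helmholtz_conditions_necessary {q : ℕ}
    (L : ℝ → (Fin q → ℝ) → (Fin q → ℝ) → (Fin q → ℝ) → ℝ)
    (hL : ContDiff ℝ (⊤ : ℕ∞)
      (fun p : ℝ × (Fin q → ℝ) × (Fin q → ℝ) × (Fin q → ℝ) =>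
        L p.1 p.2.1 p.2.2.1 p.2.2.2))
    (Etil : Fin q → ℝ → (Fin q → ℝ) → (Fin q → ℝ) → (Fin q → ℝ) → (Fin q → ℝ) → ℝ)
    (hEtil : ∀ a, ContDiff ℝ (⊤ : ℕ∞)
      (fun p : ℝ × (Fin q → ℝ) × (Fin q → ℝ) × (Fin q → ℝ) × (Fin q → ℝ) =>
        Etil a p.1 p.2.1 p.2.2.1 p.2.2.2.1 p.2.2.2.2))
    (hthird : ∀ c : ℝ → (Fin q → ℝ), ContDiff ℝ (⊤ : ℕ∞) c → ∀ t : ℝ, ∀ a : Fin q,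
      eulerPoisson L c t a
        = Etil a t (c t) (deriv c t) (deriv (deriv c) t) (deriv (deriv (deriv c)) t)) :
    ∃ A B : Fin q → Fin q → ℝ → (Fin q → ℝ) → (Fin q → ℝ) → ℝ,
    ∃ ctil : Fin q → ℝ → (Fin q → ℝ) → (Fin q → ℝ) → ℝ,
      (∀ a b, ContDiff ℝ (⊤ : ℕ∞)
        (fun p : ℝ × (Fin q → ℝ) × (Fin q → ℝ) => A a b p.1 p.2.1 p.2.2)) ∧
      (∀ a b, ContDiff ℝ (⊤ : ℕ∞)
        (fun p : ℝ × (Fin q → ℝ) × (Fin q → ℝ) => B a b p.1 p.2.1 p.2.2)) ∧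
      (∀ a, ContDiff ℝ (⊤ : ℕ∞)
        (fun p : ℝ × (Fin q → ℝ) × (Fin q → ℝ) => ctil a p.1 p.2.1 p.2.2)) ∧
      (∀ a b t x v, A a b t x v = - A b a t x v) ∧
      (∀ a : Fin q, ∀ t : ℝ, ∀ x v v' v'' : Fin q → ℝ,
        Etil a t x v v' v'' = expr20 A B ctil a t x v v' v'') ∧
      cond21On Set.univ A B ctil := by
  classical
  have hL' : ContDiff ℝ (⊤ : ℕ∞) (HelmAux.unc2 L) := hL
  have hE : ∀ a t x v w z u, eulerPoisson L (HelmAux.cpoly t x v w z u) t a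
      = Etil a t x v w z := by
    intro a t x v w z u
    rw [hthird _ (HelmAux.cpoly_smooth t x v w z u)]
    simp only [HelmAux.cpoly_deriv, HelmAux.cpoly_at]
  have hi : ∀ a t x v w, pLw a L t x v w = pLw a L t x v 0 := fun a =>
    HelmAux.pLw_indep hL' a (fun t x v w z u => by rw [hE, hE])
  have hj : ContDiff ℝ (⊤ : ℕ∞) (fun p : ℝ × (Fin q → ℝ) × (Fin q → ℝ) =>
      (p.1, p.2.1, p.2.2, (0 : Fin q → ℝ))) := by fun_prop
  let P : Fin q → HelmAux.Sm q := fun a => ⟨fun t x v => pLw a L t x v 0, by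
    have hw : ContDiff ℝ (⊤ : ℕ∞) (HelmAux.unc2 (pLw a L)) := by
      rw [HelmAux.unc2_pLw hL']; exact HelmAux.cd_dir hL' _
    exact hw.comp hj⟩
  let Q : HelmAux.Sm q := ⟨fun t x v => L t x v 0, hL'.comp hj⟩
  have hA : ∀ a b, HelmAux.AA P a b = - HelmAux.AA P b a := fun a b => by
    simp [HelmAux.AA]
  refine ⟨_, _, _, fun a b => (HelmAux.AA P a b).2, fun a b => (HelmAux.BB P Q a b).2,
    fun a => (HelmAux.CC P Q a).2, fun a b t x v => ?_, fun a t x v v' v'' => ?_,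
    HelmAux.cond P Q⟩
  · rw [hA a b]; rfl
  · rw [← hE a t x v v' v'' 0]
    exact HelmAux.final P Q (HelmAux.L_affine hL' hi) hi a t x v v' v''
end

section
/- Correspondence between a variational problem and its parametric counterpart (equations (29)–(30)): let q ≥ 1 and let L = L(t,x,v,v′) be a smooth function on ℝ × ℝ^q × ℝ^q × ℝ^q. Define ℒ on {(x,u,u̇) ∈ ℝ^{1+q} × ℝ^{1+q} × ℝ^{1+q} : u⁰ > 0} by ℒ(x,u,u̇) = u⁰ · L( x⁰, (x^a), (u^a/u⁰), ((u̇^a u⁰ − u^a u̇⁰)/(u⁰)³) ), i.e. ℒ = u⁰ (L ∘ ℘). Let γ = (x⁰, 𝐱) : ℝ → ℝ^{1+q} be a smooth curve with ẋ⁰(τ) > 0 for all τ, let φ be the inverse function of τ ↦ x⁰(τ), and let c = 𝐱 ∘ φ be the reparametrization of the spatial part by the variable t = x⁰. Then for all τ and all a = 1,…,q: 𝓔_a[ℒ,γ](τ) = ẋ⁰(τ) · E_a[L,c](x⁰(τ)), and 𝓔₀[ℒ,γ](τ) = − Σ_{a=1}^{q} ẋ^a(τ) · E_a[L,c](x⁰(τ)).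 -/
noncomputable section

/-- Partial derivative in `x^ρ` of an autonomous first-order Lagrange function
`ℓ(x,u,u̇)` on `ℝ^n × ℝ^n × ℝ^n`. -/
def pAx {n : ℕ} (ρ : Fin n) (ℓ : (Fin n → ℝ) → (Fin n → ℝ) → (Fin n → ℝ) → ℝ)
    (x u w : Fin n → ℝ) : ℝ :=
  deriv (fun s : ℝ => ℓ (x + s • (Pi.single ρ 1 : Fin n → ℝ)) u w) 0

/-- Partial derivative in `u^ρ` of `ℓ(x,u,u̇)`. -/
def pAu {n : ℕ} (ρ : Fin n) (ℓ : (Fin n → ℝ) → (Fin n → ℝ) → (Fin n → ℝ) → ℝ)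
    (x u w : Fin n → ℝ) : ℝ :=
  deriv (fun s : ℝ => ℓ x (u + s • (Pi.single ρ 1 : Fin n → ℝ)) w) 0

/-- Partial derivative in `u̇^ρ` of `ℓ(x,u,u̇)`. -/
def pAw {n : ℕ} (ρ : Fin n) (ℓ : (Fin n → ℝ) → (Fin n → ℝ) → (Fin n → ℝ) → ℝ)
    (x u w : Fin n → ℝ) : ℝ :=
  deriv (fun s : ℝ => ℓ x u (w + s • (Pi.single ρ 1 : Fin n → ℝ))) 0

/-- The Euler–Lagrange (Euler–Poisson) expressions
`𝓔_ρ[ℓ,γ](τ) = ∂ℓ/∂x^ρ − (d/dτ)(∂ℓ/∂u^ρ) + (d²/dτ²)(∂ℓ/∂u̇^ρ)` of an autonomous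
first-order Lagrange function `ℓ(x,u,u̇)` along a curve `γ`, all partial derivatives
evaluated along `τ ↦ (γ(τ), γ̇(τ), γ̈(τ))`. -/
def eulerLagrange {n : ℕ} (ℓ : (Fin n → ℝ) → (Fin n → ℝ) → (Fin n → ℝ) → ℝ)
    (γ : ℝ → (Fin n → ℝ)) (τ : ℝ) (ρ : Fin n) : ℝ :=
  pAx ρ ℓ (γ τ) (deriv γ τ) (deriv (deriv γ) τ)
    - deriv (fun σ => pAu ρ ℓ (γ σ) (deriv γ σ) (deriv (deriv γ) σ)) τ
    + deriv (deriv (fun σ => pAw ρ ℓ (γ σ) (deriv γ σ) (deriv (deriv γ) σ))) τ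

/-- The parametric Lagrange function `ℒ = u⁰ · (L ∘ ℘)` of equation (30), defined from a
second-order Lagrange function `L(t,x,v,v′)` via the projection
`℘ : (x,u,u̇) ↦ (t = x⁰, x^a, v^a = u^a/u⁰, v′^a = (u̇^a u⁰ − u^a u̇⁰)/(u⁰)³)`. -/
def paramLagrangian {q : ℕ}
    (L : ℝ → (Fin q → ℝ) → (Fin q → ℝ) → (Fin q → ℝ) → ℝ) :
    (Fin (q + 1) → ℝ) → (Fin (q + 1) → ℝ) → (Fin (q + 1) → ℝ) → ℝ :=
  fun x u du =>
    u 0 * L (x 0) (fun a : Fin q => x a.succ) (fun a : Fin q => u a.succ / u 0)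
      (fun a : Fin q => (du a.succ * u 0 - u a.succ * du 0) / (u 0) ^ 3)

/-- Partial derivative in `t` of a Lagrange function. -/
def pLt {q : ℕ} (L : ℝ → (Fin q → ℝ) → (Fin q → ℝ) → (Fin q → ℝ) → ℝ)
    (t : ℝ) (x v w : Fin q → ℝ) : ℝ :=
  deriv (fun s : ℝ => L s x v w) t

/-- Uncurried Lagrange function. -/
def unc {q : ℕ} (L : ℝ → (Fin q → ℝ) → (Fin q → ℝ) → (Fin q → ℝ) → ℝ) :
    ℝ × (Fin q → ℝ) × (Fin q → ℝ) × (Fin q → ℝ) → ℝ :=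
  fun p => L p.1 p.2.1 p.2.2.1 p.2.2.2

lemma hasDerivAt_line {q : ℕ} (x e : Fin q → ℝ) :
    HasDerivAt (fun s : ℝ => x + s • e) e 0 := by
  simpa using ((hasDerivAt_id (0 : ℝ)).smul_const e).const_add x

section partials
variable {q : ℕ} {L : ℝ → (Fin q → ℝ) → (Fin q → ℝ) → (Fin q → ℝ) → ℝ}

lemma hasDerivAt_unc (hL : Differentiable ℝ (unc L)) {T : ℝ → ℝ} {X V W : ℝ → Fin q → ℝ}
    {T' : ℝ} {X' V' W' : Fin q → ℝ} {s : ℝ}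
    (hT : HasDerivAt T T' s) (hX : HasDerivAt X X' s)
    (hV : HasDerivAt V V' s) (hW : HasDerivAt W W' s) :
    HasDerivAt (fun s => L (T s) (X s) (V s) (W s))
      (fderiv ℝ (unc L) (T s, X s, V s, W s) (T', X', V', W')) s := by
  have h1 := hT.prodMk (hX.prodMk (hV.prodMk hW))
  have h2 : HasFDerivAt (unc L) (fderiv ℝ (unc L) (T s, X s, V s, W s))
      ((fun x => (T x, X x, V x, W x)) s) := (hL (T s, X s, V s, W s)).hasFDerivAt
  exact h2.comp_hasDerivAt s h1

lemma pLt_eq (hL : Differentiable ℝ (unc L)) (t : ℝ) (x v w : Fin q → ℝ) :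
    pLt L t x v w = fderiv ℝ (unc L) (t, x, v, w) (1, 0, 0, 0) :=
  (hasDerivAt_unc hL (hasDerivAt_id t) (hasDerivAt_const t x) (hasDerivAt_const t v)
    (hasDerivAt_const t w)).deriv

lemma pLx_eq (hL : Differentiable ℝ (unc L)) (a : Fin q) (t : ℝ) (x v w : Fin q → ℝ) :
    pLx a L t x v w = fderiv ℝ (unc L) (t, x, v, w) (0, Pi.single a 1, 0, 0) := by
  have := (hasDerivAt_unc hL (hasDerivAt_const 0 t) (hasDerivAt_line x (Pi.single a 1))
    (hasDerivAt_const 0 v) (hasDerivAt_const 0 w)).deriv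
  simpa [pLx] using this

lemma pLv_eq (hL : Differentiable ℝ (unc L)) (a : Fin q) (t : ℝ) (x v w : Fin q → ℝ) :
    pLv a L t x v w = fderiv ℝ (unc L) (t, x, v, w) (0, 0, Pi.single a 1, 0) := by
  have := (hasDerivAt_unc hL (hasDerivAt_const 0 t) (hasDerivAt_const 0 x)
    (hasDerivAt_line v (Pi.single a 1)) (hasDerivAt_const 0 w)).deriv
  simpa [pLv] using this

lemma pLw_eq (hL : Differentiable ℝ (unc L)) (a : Fin q) (t : ℝ) (x v w : Fin q → ℝ) :
    pLw a L t x v w = fderiv ℝ (unc L) (t, x, v, w) (0, 0, 0, Pi.single a 1) := by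
  have := (hasDerivAt_unc hL (hasDerivAt_const 0 t) (hasDerivAt_const 0 x)
    (hasDerivAt_const 0 v) (hasDerivAt_line w (Pi.single a 1))).deriv
  simpa [pLw] using this

lemma pi_expand (x : Fin q → ℝ) {E : Type*} [AddCommGroup E] [Module ℝ E]
    (f : (Fin q → ℝ) →ₗ[ℝ] E) : f x = ∑ b, x b • f (Pi.single b 1) := by
  conv_lhs => rw [pi_eq_sum_univ' x]
  simp [map_sum]

lemma fderiv_expand (hL : Differentiable ℝ (unc L)) (t : ℝ) (x v w : Fin q → ℝ)
    (T' : ℝ) (X' V' W' : Fin q → ℝ) :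
    fderiv ℝ (unc L) (t, x, v, w) (T', X', V', W') =
      T' * pLt L t x v w + ∑ b, (X' b * pLx b L t x v w + V' b * pLv b L t x v w
        + W' b * pLw b L t x v w) := by
  set f := fderiv ℝ (unc L) (t, x, v, w) with hf
  have h : (T', X', V', W') = T' • ((1 : ℝ), (0 : Fin q → ℝ), (0 : Fin q → ℝ), (0 : Fin q → ℝ))
      + ((0 : ℝ), X', (0 : Fin q → ℝ), (0 : Fin q → ℝ))
      + ((0 : ℝ), (0 : Fin q → ℝ), V', (0 : Fin q → ℝ))
      + ((0 : ℝ), (0 : Fin q → ℝ), (0 : Fin q → ℝ), W') := by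
    simp
  have h1 := pi_expand X' (f.toLinearMap ∘ₗ LinearMap.inr ℝ ℝ _ ∘ₗ LinearMap.inl ℝ _ _)
  have h2 := pi_expand V' (f.toLinearMap ∘ₗ LinearMap.inr ℝ ℝ _ ∘ₗ LinearMap.inr ℝ (Fin q → ℝ) _
    ∘ₗ LinearMap.inl ℝ _ _)
  have h3 := pi_expand W' (f.toLinearMap ∘ₗ LinearMap.inr ℝ ℝ _ ∘ₗ LinearMap.inr ℝ (Fin q → ℝ) _
    ∘ₗ LinearMap.inr ℝ _ _)
  simp only [LinearMap.comp_apply, LinearMap.inr_apply, LinearMap.inl_apply,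
    ContinuousLinearMap.coe_coe, smul_eq_mul] at h1 h2 h3
  rw [h, map_add, map_add, map_add, map_smul, smul_eq_mul]
  simp only [Finset.sum_add_distrib, pLt_eq hL, pLx_eq hL, pLv_eq hL, pLw_eq hL, ← hf]
  simp only [Prod.mk_zero_zero]
  rw [h1, h2, h3]
  ring

lemma hasDerivAt_L (hL : Differentiable ℝ (unc L)) {T : ℝ → ℝ} {X V W : ℝ → Fin q → ℝ}
    {T' : ℝ} {X' V' W' : Fin q → ℝ} {s : ℝ}
    (hT : HasDerivAt T T' s) (hX : HasDerivAt X X' s)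
    (hV : HasDerivAt V V' s) (hW : HasDerivAt W W' s) :
    HasDerivAt (fun s => L (T s) (X s) (V s) (W s))
      (T' * pLt L (T s) (X s) (V s) (W s) + ∑ b, (X' b * pLx b L (T s) (X s) (V s) (W s)
        + V' b * pLv b L (T s) (X s) (V s) (W s)
        + W' b * pLw b L (T s) (X s) (V s) (W s))) s := by
  rw [← fderiv_expand hL]; exact hasDerivAt_unc hL hT hX hV hW

lemma smooth_along (hL : ContDiff ℝ (⊤ : ℕ∞) (unc L)) {T : ℝ → ℝ} {X V W : ℝ → Fin q → ℝ}
    (hT : ContDiff ℝ (⊤ : ℕ∞) T) (hX : ContDiff ℝ (⊤ : ℕ∞) X) (hV : ContDiff ℝ (⊤ : ℕ∞) V)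
    (hW : ContDiff ℝ (⊤ : ℕ∞) W) (e : ℝ × (Fin q → ℝ) × (Fin q → ℝ) × (Fin q → ℝ)) :
    ContDiff ℝ (⊤ : ℕ∞) (fun s => fderiv ℝ (unc L) (T s, X s, V s, W s) e) := by
  have h : ContDiff ℝ (⊤ : ℕ∞) (fderiv ℝ (unc L)) := hL.fderiv_right (by simp)
  exact (h.comp (hT.prodMk (hX.prodMk (hV.prodMk hW)))).clm_apply contDiff_const

end partials

/-- Reparametrisation of a derivative. -/
lemma deriv_reparam {E : Type*} [NormedAddCommGroup E] [NormedSpace ℝ E] {T φ : ℝ → ℝ}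
    (hT : ContDiff ℝ (⊤ : ℕ∞) T) (hpos : ∀ τ, 0 < deriv T τ) (hφ : ∀ τ, φ (T τ) = τ)
    {g G : ℝ → E} (hg : ∀ τ, g (T τ) = G τ) (hG : Differentiable ℝ G) (τ : ℝ) :
    deriv g (T τ) = (deriv T τ)⁻¹ • deriv G τ := by
  have hs : HasStrictDerivAt T (deriv T τ) τ :=
    hT.contDiffAt.hasStrictDerivAt (by simp)
  have h0 := (hpos τ).ne'
  have hphi : HasDerivAt φ (deriv T τ)⁻¹ (T τ) :=
    (hs.to_local_left_inverse h0 (Filter.Eventually.of_forall hφ)).hasDerivAt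
  have hev : g =ᶠ[nhds (T τ)] G ∘ φ := by
    rw [← hs.map_nhds_eq h0]
    refine Filter.eventually_map.2 (Filter.Eventually.of_forall fun σ => ?_)
    simp [hg, hφ]
  rw [hev.deriv_eq]
  have h1 : HasDerivAt G (deriv G τ) (φ (T τ)) := by rw [hφ]; exact (hG τ).hasDerivAt
  exact (h1.scomp (T τ) hphi).deriv

/-- Graph velocity. -/
def gv {q : ℕ} (u : Fin (q + 1) → ℝ) : Fin q → ℝ := fun a => u a.succ / u 0

/-- Graph acceleration. -/
def gw {q : ℕ} (u du : Fin (q + 1) → ℝ) : Fin q → ℝ :=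
  fun a => (du a.succ * u 0 - u a.succ * du 0) / (u 0) ^ 3

/-- Spatial part. -/
def gx {q : ℕ} (x : Fin (q + 1) → ℝ) : Fin q → ℝ := fun a => x a.succ

section param
variable {q : ℕ} {L : ℝ → (Fin q → ℝ) → (Fin q → ℝ) → (Fin q → ℝ) → ℝ}

lemma line_comp {n : ℕ} (x e : Fin n → ℝ) (i : Fin n) :
    HasDerivAt (fun s : ℝ => (x + s • e) i) (e i) 0 :=
  hasDerivAt_pi.1 (hasDerivAt_line x e) i

lemma hasDerivAt_gx (x e : Fin (q + 1) → ℝ) :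
    HasDerivAt (fun s : ℝ => gx (x + s • e)) (gx e) 0 :=
  hasDerivAt_pi.2 fun i => line_comp x e i.succ

lemma hasDerivAt_gv (u e : Fin (q + 1) → ℝ) (h0 : u 0 ≠ 0) :
    HasDerivAt (fun s : ℝ => gv (u + s • e))
      (fun a => (e a.succ * u 0 - u a.succ * e 0) / (u 0) ^ 2) 0 := by
  refine hasDerivAt_pi.2 fun i => ?_
  have := (line_comp u e i.succ).div (line_comp u e 0) (by simpa using h0)
  refine this.congr_deriv ?_
  simp

lemma hasDerivAt_gw_u (u du e : Fin (q + 1) → ℝ) (h0 : u 0 ≠ 0) :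
    HasDerivAt (fun s : ℝ => gw (u + s • e) du)
      (fun a => (du a.succ * e 0 - e a.succ * du 0) / (u 0) ^ 3
        - 3 * e 0 * (du a.succ * u 0 - u a.succ * du 0) / (u 0) ^ 4) 0 := by
  refine hasDerivAt_pi.2 fun i => ?_
  have := (((line_comp u e 0).const_mul (du i.succ)).sub
    ((line_comp u e i.succ).mul_const (du 0))).div ((line_comp u e 0).pow 3)
    (by simpa using h0)
  refine this.congr_deriv ?_
  simp
  field_simp

lemma hasDerivAt_gw_w (u du e : Fin (q + 1) → ℝ) :
    HasDerivAt (fun s : ℝ => gw u (du + s • e)) (gw u e) 0 := by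
  refine hasDerivAt_pi.2 fun i => ?_
  exact (((line_comp du e i.succ).mul_const (u 0)).sub
    ((line_comp du e 0).const_mul (u i.succ))).div_const ((u 0) ^ 3)

lemma pAx_gen (ρ : Fin (q + 1)) (hL : Differentiable ℝ (unc L)) (x u du : Fin (q + 1) → ℝ) :
    pAx ρ (paramLagrangian L) x u du =
      u 0 * ((Pi.single ρ 1 : Fin (q + 1) → ℝ) 0 * pLt L (x 0) (gx x) (gv u) (gw u du)
        + ∑ b : Fin q, (Pi.single ρ 1 : Fin (q + 1) → ℝ) b.succ *
          pLx b L (x 0) (gx x) (gv u) (gw u du)) := by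
  have h := (hasDerivAt_L hL (line_comp x (Pi.single ρ 1) 0) (hasDerivAt_gx x (Pi.single ρ 1))
    (hasDerivAt_const 0 (gv u)) (hasDerivAt_const 0 (gw u du))).const_mul (u 0)
  have h2 := h.deriv
  simp only [zero_smul, add_zero, Pi.zero_apply, zero_mul] at h2
  exact h2

lemma pAw_gen (ρ : Fin (q + 1)) (hL : Differentiable ℝ (unc L)) (x u du : Fin (q + 1) → ℝ) :
    pAw ρ (paramLagrangian L) x u du =
      u 0 * ∑ b : Fin q, gw u (Pi.single ρ 1) b * pLw b L (x 0) (gx x) (gv u) (gw u du) := by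
  have h := (hasDerivAt_L hL (hasDerivAt_const 0 (x 0)) (hasDerivAt_const 0 (gx x))
    (hasDerivAt_const 0 (gv u)) (hasDerivAt_gw_w u du (Pi.single ρ 1))).const_mul (u 0)
  have h2 := h.deriv
  simp only [zero_smul, add_zero, zero_add, Pi.zero_apply, zero_mul] at h2
  exact h2

lemma pAu_gen (ρ : Fin (q + 1)) (hL : Differentiable ℝ (unc L)) (x u du : Fin (q + 1) → ℝ)
    (h0 : u 0 ≠ 0) :
    pAu ρ (paramLagrangian L) x u du =
      (Pi.single ρ 1 : Fin (q + 1) → ℝ) 0 * L (x 0) (gx x) (gv u) (gw u du) +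
      u 0 * ∑ b : Fin q,
        (((Pi.single ρ 1 : Fin (q + 1) → ℝ) b.succ * u 0
          - u b.succ * (Pi.single ρ 1 : Fin (q + 1) → ℝ) 0) / (u 0) ^ 2
            * pLv b L (x 0) (gx x) (gv u) (gw u du)
        + ((du b.succ * (Pi.single ρ 1 : Fin (q + 1) → ℝ) 0
            - (Pi.single ρ 1 : Fin (q + 1) → ℝ) b.succ * du 0) / (u 0) ^ 3
            - 3 * (Pi.single ρ 1 : Fin (q + 1) → ℝ) 0
              * (du b.succ * u 0 - u b.succ * du 0) / (u 0) ^ 4)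
            * pLw b L (x 0) (gx x) (gv u) (gw u du)) := by
  have h := (line_comp u (Pi.single ρ 1) 0).mul
    (hasDerivAt_L hL (hasDerivAt_const 0 (x 0)) (hasDerivAt_const 0 (gx x))
    (hasDerivAt_gv u (Pi.single ρ 1) h0) (hasDerivAt_gw_u u du (Pi.single ρ 1) h0))
  have h2 := h.deriv
  simp only [zero_smul, add_zero, zero_add, Pi.zero_apply, zero_mul] at h2
  exact h2

lemma pAx_succ (a : Fin q) (hL : Differentiable ℝ (unc L)) (x u du : Fin (q + 1) → ℝ) :
    pAx a.succ (paramLagrangian L) x u du = u 0 * pLx a L (x 0) (gx x) (gv u) (gw u du) := by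
  rw [pAx_gen _ hL]
  simp [Pi.single_apply]

lemma pAx_zero (hL : Differentiable ℝ (unc L)) (x u du : Fin (q + 1) → ℝ) :
    pAx 0 (paramLagrangian L) x u du = u 0 * pLt L (x 0) (gx x) (gv u) (gw u du) := by
  rw [pAx_gen _ hL]
  simp [Pi.single_apply]

lemma pAw_succ (a : Fin q) (hL : Differentiable ℝ (unc L)) (x u du : Fin (q + 1) → ℝ)
    (h0 : u 0 ≠ 0) :
    pAw a.succ (paramLagrangian L) x u du = pLw a L (x 0) (gx x) (gv u) (gw u du) / u 0 := by
  rw [pAw_gen _ hL, Finset.sum_eq_single a]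
  · simp [gw]; field_simp
  · intro b _ hb
    simp [gw, hb]
  · simp

lemma pAw_zero (hL : Differentiable ℝ (unc L)) (x u du : Fin (q + 1) → ℝ)
    (h0 : u 0 ≠ 0) :
    pAw 0 (paramLagrangian L) x u du =
      ∑ b, -(pLw b L (x 0) (gx x) (gv u) (gw u du) * gv u b / u 0) := by
  rw [pAw_gen _ hL, Finset.mul_sum]
  refine Finset.sum_congr rfl fun b _ => ?_
  generalize pLw b L (x 0) (gx x) (gv u) (gw u du) = W
  simp [gw, gv]; field_simp

lemma pAu_succ (a : Fin q) (hL : Differentiable ℝ (unc L)) (x u du : Fin (q + 1) → ℝ)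
    (h0 : u 0 ≠ 0) :
    pAu a.succ (paramLagrangian L) x u du = pLv a L (x 0) (gx x) (gv u) (gw u du)
      - pLw a L (x 0) (gx x) (gv u) (gw u du) * du 0 / u 0 ^ 2 := by
  rw [pAu_gen _ hL _ _ _ h0, Finset.sum_eq_single a]
  · simp; field_simp; ring
  · intro b _ hb
    simp [hb]
  · simp

lemma pAu_zero (hL : Differentiable ℝ (unc L)) (x u du : Fin (q + 1) → ℝ)
    (h0 : u 0 ≠ 0) :
    pAu 0 (paramLagrangian L) x u du = L (x 0) (gx x) (gv u) (gw u du) +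
      ∑ b, (-(pLv b L (x 0) (gx x) (gv u) (gw u du) * gv u b)
      + pLw b L (x 0) (gx x) (gv u) (gw u du) *
        (-2 * gw u du b + gv u b * du 0 / u 0 ^ 2)) := by
  rw [pAu_gen _ hL _ _ _ h0, Finset.mul_sum]
  congr 1
  · simp
  refine Finset.sum_congr rfl fun b _ => ?_
  generalize pLw b L (x 0) (gx x) (gv u) (gw u du) = W
  generalize pLv b L (x 0) (gx x) (gv u) (gw u du) = V
  simp [gw, gv]; field_simp; ring

end param

/-- The one-dimensional identity behind the spatial components. -/
lemma alg_succ {V W y : ℝ → ℝ} (hV : ContDiff ℝ (⊤ : ℕ∞) V) (hW : ContDiff ℝ (⊤ : ℕ∞) W)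
    (hy : ContDiff ℝ (⊤ : ℕ∞) y) (h0 : ∀ τ, y τ ≠ 0) (τ : ℝ) :
    - deriv (fun σ => V σ - W σ * deriv y σ / y σ ^ 2) τ
      + deriv (deriv (fun σ => W σ / y σ)) τ
    = - deriv V τ + deriv (fun σ => deriv W σ / y σ) τ := by
  have dV := (contDiff_infty_iff_deriv.1 hV).1
  obtain ⟨dW, hW1⟩ := contDiff_infty_iff_deriv.1 hW
  obtain ⟨dy, hy1⟩ := contDiff_infty_iff_deriv.1 hy
  have dW1 := (contDiff_infty_iff_deriv.1 hW1).1
  have dy1 := (contDiff_infty_iff_deriv.1 hy1).1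
  have e1 : deriv (fun σ => W σ / y σ)
      = fun σ => deriv W σ / y σ - W σ * deriv y σ / y σ ^ 2 := by
    funext σ
    rw [deriv_fun_div (dW σ) (dy σ) (h0 σ)]
    have := h0 σ
    field_simp
  have dA : Differentiable ℝ (fun σ => W σ * deriv y σ / y σ ^ 2) :=
    (dW.mul dy1).div (dy.pow 2) fun σ => pow_ne_zero 2 (h0 σ)
  have dB : Differentiable ℝ (fun σ => deriv W σ / y σ) := dW1.div dy h0
  rw [e1, deriv_fun_sub (dV τ) (dA τ), deriv_fun_sub (dB τ) (dA τ)]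
  ring

/-- The identity behind the time component. -/
lemma alg_zero {q : ℕ} {V W v w : Fin q → ℝ → ℝ} {y L0 : ℝ → ℝ}
    (hV : ∀ b, ContDiff ℝ (⊤ : ℕ∞) (V b)) (hW : ∀ b, ContDiff ℝ (⊤ : ℕ∞) (W b))
    (hv : ∀ b, ContDiff ℝ (⊤ : ℕ∞) (v b)) (hw : ∀ b, ContDiff ℝ (⊤ : ℕ∞) (w b))
    (hvw : ∀ b σ, deriv (v b) σ = w b σ * y σ)
    (hy : ContDiff ℝ (⊤ : ℕ∞) y) (h0 : ∀ τ, y τ ≠ 0) (τ : ℝ) (hL0 : Differentiable ℝ L0) :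
    - deriv (fun σ => L0 σ + ∑ b, (-(V b σ * v b σ)
        + W b σ * (-2 * w b σ + v b σ * deriv y σ / y σ ^ 2))) τ
      + deriv (deriv (fun σ => ∑ b, -(W b σ * v b σ / y σ))) τ
    = - deriv L0 τ + ∑ b, (deriv (V b) τ * v b τ + V b τ * (w b τ * y τ)
      + W b τ * deriv (w b) τ - deriv (fun σ => deriv (W b) σ / y σ) τ * v b τ) := by
  have dV := fun b => (contDiff_infty_iff_deriv.1 (hV b)).1
  have dW := fun b => (contDiff_infty_iff_deriv.1 (hW b)).1
  have dv := fun b => (contDiff_infty_iff_deriv.1 (hv b)).1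
  have dw := fun b => (contDiff_infty_iff_deriv.1 (hw b)).1
  have dW1 := fun b => (contDiff_infty_iff_deriv.1 (contDiff_infty_iff_deriv.1 (hW b)).2).1
  obtain ⟨dy, hy1⟩ := contDiff_infty_iff_deriv.1 hy
  have dy1 := (contDiff_infty_iff_deriv.1 hy1).1
  have dB : ∀ b, Differentiable ℝ (fun σ => deriv (W b) σ / y σ) := fun b => (dW1 b).div dy h0
  have dC : ∀ b, Differentiable ℝ (fun σ => W b σ * (v b σ * deriv y σ / y σ ^ 2)) := fun b =>
    (dW b).mul (((dv b).mul dy1).div (dy.pow 2) fun σ => pow_ne_zero 2 (h0 σ))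
  have dW' : ∀ b σ, HasDerivAt (W b) (deriv (W b) σ) σ := fun b σ => (dW b σ).hasDerivAt
  have dV' : ∀ b σ, HasDerivAt (V b) (deriv (V b) σ) σ := fun b σ => (dV b σ).hasDerivAt
  have dw' : ∀ b σ, HasDerivAt (w b) (deriv (w b) σ) σ := fun b σ => (dw b σ).hasDerivAt
  have dv' : ∀ b σ, HasDerivAt (v b) (w b σ * y σ) σ := fun b σ => by
    rw [← hvw]; exact (dv b σ).hasDerivAt
  have dy' : ∀ σ, HasDerivAt y (deriv y σ) σ := fun σ => (dy σ).hasDerivAt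
  have e1 : deriv (fun σ => ∑ b, -(W b σ * v b σ / y σ)) = fun σ => ∑ b,
      (-(deriv (W b) σ / y σ * v b σ) - W b σ * w b σ
        + W b σ * (v b σ * deriv y σ / y σ ^ 2)) := by
    funext σ
    refine (HasDerivAt.fun_sum fun b _ => ?_).deriv
    refine ((((dW' b σ).mul (dv' b σ)).div (dy' σ) (h0 σ)).neg).congr_deriv ?_
    have := h0 σ
    simp only [Pi.mul_apply]
    field_simp
    ring
  have e2 : HasDerivAt (fun σ => L0 σ + ∑ b, (-(V b σ * v b σ)
        + W b σ * (-2 * w b σ + v b σ * deriv y σ / y σ ^ 2)))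
      (deriv L0 τ + ∑ b, (-(deriv (V b) τ * v b τ + V b τ * (w b τ * y τ))
        + (-2 * (deriv (W b) τ * w b τ + W b τ * deriv (w b) τ)
          + deriv (fun σ => W b σ * (v b σ * deriv y σ / y σ ^ 2)) τ))) τ := by
    refine (hL0 τ).hasDerivAt.add (HasDerivAt.fun_sum fun b _ => ?_)
    refine (((dV' b τ).mul (dv' b τ)).neg.add ((((dW' b τ).mul (dw' b τ)).const_mul (-2)).add
      (dC b τ).hasDerivAt)).congr_of_eventuallyEq (Filter.Eventually.of_forall fun σ => ?_)
    simp only [Pi.mul_apply, Pi.add_apply, Pi.neg_apply]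
    ring
  have e3 : HasDerivAt (fun σ => ∑ b,
      (-(deriv (W b) σ / y σ * v b σ) - W b σ * w b σ
        + W b σ * (v b σ * deriv y σ / y σ ^ 2)))
      (∑ b, (-(deriv (fun σ => deriv (W b) σ / y σ) τ * v b τ
          + deriv (W b) τ / y τ * (w b τ * y τ))
        - (deriv (W b) τ * w b τ + W b τ * deriv (w b) τ)
        + deriv (fun σ => W b σ * (v b σ * deriv y σ / y σ ^ 2)) τ)) τ := by
    refine HasDerivAt.fun_sum fun b _ => ?_
    exact (((dB b τ).hasDerivAt.mul (dv' b τ)).neg.sub ((dW' b τ).mul (dw' b τ))).add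
      (dC b τ).hasDerivAt
  rw [e1, e2.deriv, e3.deriv, neg_add, add_assoc, ← Finset.sum_neg_distrib,
    ← Finset.sum_add_distrib]
  congr 1
  refine Finset.sum_congr rfl fun b _ => ?_
  have := h0 τ
  field_simp
  ring

/-- Correspondence between a variational problem and its parametric
counterpart (equations (29)–(30)): along a curve `γ = (x⁰, 𝐱)` with `ẋ⁰ > 0`, the
Euler–Lagrange expressions of `ℒ = u⁰ (L ∘ ℘)` are `𝓔_a = ẋ⁰ · (E_a[L,c] ∘ x⁰)` and
`𝓔₀ = − Σ_a ẋ^a · (E_a[L,c] ∘ x⁰)`, where `c = 𝐱 ∘ φ` is the reparametrization of the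
spatial part by the time `t = x⁰(τ)`, `φ` being the inverse function of `x⁰`. -/
theorem parametric_eulerLagrange_correspondence {q : ℕ} (hq : 1 ≤ q)
    (L : ℝ → (Fin q → ℝ) → (Fin q → ℝ) → (Fin q → ℝ) → ℝ)
    (hL : ContDiff ℝ (⊤ : ℕ∞)
      (fun p : ℝ × (Fin q → ℝ) × (Fin q → ℝ) × (Fin q → ℝ) =>
        L p.1 p.2.1 p.2.2.1 p.2.2.2))
    (γ : ℝ → (Fin (q + 1) → ℝ)) (hγ : ContDiff ℝ (⊤ : ℕ∞) γ)
    (hpos : ∀ τ : ℝ, 0 < deriv γ τ 0)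
    (φ : ℝ → ℝ) (hφ : ∀ τ : ℝ, φ (γ τ 0) = τ)
    (c : ℝ → (Fin q → ℝ)) (hc : c = fun t => fun a : Fin q => γ (φ t) a.succ) :
    ∀ τ : ℝ,
      (∀ a : Fin q,
        eulerLagrange (paramLagrangian L) γ τ a.succ
          = deriv γ τ 0 * eulerPoisson L c (γ τ 0) a) ∧
      eulerLagrange (paramLagrangian L) γ τ 0
        = - ∑ a : Fin q, deriv γ τ a.succ * eulerPoisson L c (γ τ 0) a := by
  have hL' : ContDiff ℝ (⊤ : ℕ∞) (unc L) := hL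
  have dL : Differentiable ℝ (unc L) := hL'.differentiable (by simp)
  obtain ⟨dγ, hγ1⟩ := contDiff_infty_iff_deriv.1 hγ
  obtain ⟨dγ1, hγ2⟩ := contDiff_infty_iff_deriv.1 hγ1
  have c0 : ∀ i, ContDiff ℝ (⊤ : ℕ∞) (fun σ => γ σ i) := fun i => contDiff_pi.1 hγ i
  have c1 : ∀ i, ContDiff ℝ (⊤ : ℕ∞) (fun σ => deriv γ σ i) := fun i => contDiff_pi.1 hγ1 i
  have c2 : ∀ i, ContDiff ℝ (⊤ : ℕ∞) (fun σ => deriv (deriv γ) σ i) :=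
    fun i => contDiff_pi.1 hγ2 i
  have d0 : ∀ i σ, HasDerivAt (fun σ => γ σ i) (deriv γ σ i) σ :=
    fun i σ => hasDerivAt_pi.1 (dγ σ).hasDerivAt i
  have d1 : ∀ i σ, HasDerivAt (fun σ => deriv γ σ i) (deriv (deriv γ) σ i) σ :=
    fun i σ => hasDerivAt_pi.1 (dγ1 σ).hasDerivAt i
  have h0 : ∀ σ, deriv γ σ 0 ≠ 0 := fun σ => (hpos σ).ne'
  have eT : ∀ σ, deriv (fun σ => γ σ 0) σ = deriv γ σ 0 := fun σ => (d0 0 σ).deriv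
  have ey : ∀ σ, deriv (fun σ => deriv γ σ 0) σ = deriv (deriv γ) σ 0 := fun σ => (d1 0 σ).deriv
  have cX : ContDiff ℝ (⊤ : ℕ∞) (fun σ => gx (γ σ)) := contDiff_pi.2 fun b => c0 b.succ
  have cv : ContDiff ℝ (⊤ : ℕ∞) (fun σ => gv (deriv γ σ)) :=
    contDiff_pi.2 fun b => (c1 b.succ).div (c1 0) h0
  have cw : ContDiff ℝ (⊤ : ℕ∞) (fun σ => gw (deriv γ σ) (deriv (deriv γ) σ)) :=
    contDiff_pi.2 fun b => (((c2 b.succ).mul (c1 0)).sub ((c1 b.succ).mul (c2 0))).div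
      ((c1 0).pow 3) fun σ => pow_ne_zero 3 (h0 σ)
  have dX : ∀ σ, HasDerivAt (fun σ => gx (γ σ)) (gx (deriv γ σ)) σ :=
    fun σ => hasDerivAt_pi.2 fun b => d0 b.succ σ
  have dv : ∀ σ, HasDerivAt (fun σ => gv (deriv γ σ))
      (fun b => gw (deriv γ σ) (deriv (deriv γ) σ) b * deriv γ σ 0) σ := by
    refine fun σ => hasDerivAt_pi.2 fun b => ?_
    refine ((d1 b.succ σ).div (d1 0 σ) (h0 σ)).congr_deriv ?_
    have := h0 σ
    simp only [gw]
    field_simp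
  have rep : ∀ {E : Type} [NormedAddCommGroup E] [NormedSpace ℝ E] {g G : ℝ → E},
      (∀ σ, g (γ σ 0) = G σ) → Differentiable ℝ G → ∀ σ,
      deriv g (γ σ 0) = (deriv γ σ 0)⁻¹ • deriv G σ := by
    intro E _ _ g G hg hG σ
    have := deriv_reparam (c0 0) (fun τ => by rw [eT]; exact hpos τ) hφ hg hG σ
    rwa [eT] at this
  have k0 : ∀ σ, c (γ σ 0) = gx (γ σ) := by
    intro σ; rw [hc]; funext b; simp [hφ, gx]
  have k1 : ∀ σ, deriv c (γ σ 0) = gv (deriv γ σ) := by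
    intro σ
    rw [rep k0 (fun σ => (dX σ).differentiableAt), (dX σ).deriv]
    funext b
    simp [gv, gx, div_eq_inv_mul]
  have k2 : ∀ σ, deriv (deriv c) (γ σ 0) = gw (deriv γ σ) (deriv (deriv γ) σ) := by
    intro σ
    rw [rep k1 (fun σ => (dv σ).differentiableAt), (dv σ).deriv]
    funext b
    have := h0 σ
    simp only [Pi.smul_apply, smul_eq_mul]
    field_simp
  have cV : ∀ b, ContDiff ℝ (⊤ : ℕ∞) (fun σ => pLv b L (γ σ 0) (gx (γ σ)) (gv (deriv γ σ))
      (gw (deriv γ σ) (deriv (deriv γ) σ))) := by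
    intro b
    simp only [pLv_eq dL]
    exact smooth_along hL' (c0 0) cX cv cw _
  have cW : ∀ b, ContDiff ℝ (⊤ : ℕ∞) (fun σ => pLw b L (γ σ 0) (gx (γ σ)) (gv (deriv γ σ))
      (gw (deriv γ σ) (deriv (deriv γ) σ))) := by
    intro b
    simp only [pLw_eq dL]
    exact smooth_along hL' (c0 0) cX cv cw _
  have EP : ∀ σ a, eulerPoisson L c (γ σ 0) a =
      pLx a L (γ σ 0) (gx (γ σ)) (gv (deriv γ σ)) (gw (deriv γ σ) (deriv (deriv γ) σ))
      - (deriv γ σ 0)⁻¹ * deriv (fun σ => pLv a L (γ σ 0) (gx (γ σ)) (gv (deriv γ σ))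
          (gw (deriv γ σ) (deriv (deriv γ) σ))) σ
      + (deriv γ σ 0)⁻¹ * deriv (fun σ => deriv (fun σ => pLw a L (γ σ 0) (gx (γ σ))
          (gv (deriv γ σ)) (gw (deriv γ σ) (deriv (deriv γ) σ))) σ / deriv γ σ 0) σ := by
    intro σ a
    unfold eulerPoisson
    have r1 := rep (g := fun τ => pLv a L τ (c τ) (deriv c τ) (deriv (deriv c) τ))
      (fun σ => by simp only [k0, k1, k2]) ((cV a).differentiable (by simp)) σ
    have r2 := rep (g := fun τ => pLw a L τ (c τ) (deriv c τ) (deriv (deriv c) τ))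
      (fun σ => by simp only [k0, k1, k2]) ((cW a).differentiable (by simp))
    have dW1 := (contDiff_infty_iff_deriv.1 (contDiff_infty_iff_deriv.1 (cW a)).2).1
    have r3 := rep (g := deriv (fun τ => pLw a L τ (c τ) (deriv c τ) (deriv (deriv c) τ))) (G := fun σ => deriv (fun σ => pLw a L (γ σ 0) (gx (γ σ))
          (gv (deriv γ σ)) (gw (deriv γ σ) (deriv (deriv γ) σ))) σ / deriv γ σ 0)
      (fun σ => by rw [r2 σ, smul_eq_mul, div_eq_inv_mul])
      (dW1.div ((c1 0).differentiable (by simp)) h0) σ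
    rw [r1, r3, k0, k1, k2]
    simp only [smul_eq_mul]
  intro τ
  refine ⟨fun a => ?_, ?_⟩
  · have key := alg_succ (cV a) (cW a) (c1 0) h0 τ
    simp only [ey] at key
    rw [EP]
    unfold eulerLagrange
    simp only [pAx_succ a dL, pAw_succ a dL _ _ _ (h0 _), pAu_succ a dL _ _ _ (h0 _)]
    rw [sub_eq_add_neg, add_assoc, key]
    have := h0 τ
    field_simp
    ring
  · have hL0 : ∀ σ, HasDerivAt (fun σ => L (γ σ 0) (gx (γ σ)) (gv (deriv γ σ))
      (gw (deriv γ σ) (deriv (deriv γ) σ))) _ σ := fun σ => hasDerivAt_L dL (d0 0 σ) (dX σ) (dv σ)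
        ((cw.differentiable (by simp)) σ).hasDerivAt
    have key := alg_zero cV cW (fun b => contDiff_pi.1 cv b) (fun b => contDiff_pi.1 cw b)
      (fun b σ => (hasDerivAt_pi.1 (dv σ) b).deriv) (c1 0) h0 τ
      (fun σ => (hL0 σ).differentiableAt)
    rw [(hL0 τ).deriv] at key
    simp only [ey] at key
    simp only [EP]
    unfold eulerLagrange
    simp only [pAx_zero dL, pAw_zero dL _ _ _ (h0 _), pAu_zero dL _ _ _ (h0 _)]
    rw [sub_eq_add_neg, add_assoc, key, neg_add, add_assoc, ← add_assoc, add_neg_cancel, zero_add,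
      ← Finset.sum_neg_distrib, ← Finset.sum_neg_distrib, ← Finset.sum_add_distrib]
    refine Finset.sum_congr rfl fun b _ => ?_
    have hwb : deriv (fun σ => gw (deriv γ σ) (deriv (deriv γ) σ)) τ b
        = deriv (fun σ => gw (deriv γ σ) (deriv (deriv γ) σ) b) τ :=
      ((hasDerivAt_pi.1 ((cw.differentiable (by simp)) τ).hasDerivAt b).deriv).symm
    rw [hwb]
    have hv1 : gv (deriv γ τ) b = deriv γ τ b.succ / deriv γ τ 0 := rfl
    have hx1 : gx (deriv γ τ) b = deriv γ τ b.succ := rfl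
    rw [hv1, hx1]
    have := h0 τ
    field_simp
    ring

end
end
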